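/- arXiv:1008.3405 — 8 statements merged into one kernel-verified Lean document; each statement's English description precedes it below -/
import Mathlib

section
/- A pair (p⁰,q⁰) ∈ G × A satisfies the formal ε = 0 system { a⊥(p⁰,η) + a⊥(q⁰,η) = ℓ(η) for all η ∈ G, and a∥(q⁰,ξ) = 0 for all ξ ∈ A } if and only if q⁰ = 0 and p⁰ is the unique solution of the Limit problem (L). In particular this system has a unique solution. -/
/-! Taking `ξ = q` in the second equation of the formal system gives `a∥(q,q) = 0`, so `q` lies in
`G ∩ A = {0}`, and what remains is the Limit problem on `G`. There `a∥` vanishes, so the coercivity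
of `a∥ + a⊥` is coercivity of `a⊥`, and since `G` is a closed subspace the Lax–Milgram theorem makes
the Limit problem uniquely solvable. -/

/-- A continuous, symmetric, positive semidefinite bilinear form on a real
inner-product space. -/
def IsCSPForm {V : Type*} [NormedAddCommGroup V] [InnerProductSpace ℝ V]
    (a : V →ₗ[ℝ] V →ₗ[ℝ] ℝ) : Prop :=
  (∀ x y : V, a x y = a y x) ∧ (∀ x : V, 0 ≤ a x x) ∧
    (∃ C : ℝ, ∀ x y : V, |a x y| ≤ C * ‖x‖ * ‖y‖)

namespace IsCSPForm

variable {V : Type*} [NormedAddCommGroup V] [InnerProductSpace ℝ V] {a : V →ₗ[ℝ] V →ₗ[ℝ] ℝ}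

theorem apply_eq_zero_of_apply_self_eq_zero (ha : IsCSPForm a) {x : V} (hx : a x x = 0) (y : V) :
    a x y = 0 := by
  have cauchy_schwarz := LinearMap.BilinForm.apply_mul_apply_le_of_forall_zero_le a ha.2.1 x y
  rw [hx, ha.1 y x, zero_mul] at cauchy_schwarz
  exact mul_self_eq_zero.mp (le_antisymm cauchy_schwarz (mul_self_nonneg _))

/-- The subspace of isotropic vectors of a continuous positive semidefinite form. For `a = a∥` this
is the space `G`; the carrier is written so that membership unfolds to `a φ φ = 0`. -/
def nullSpace (ha : IsCSPForm a) : Submodule ℝ V where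
  carrier := {φ | a φ φ = 0}
  zero_mem' := by simp
  add_mem' {x y} hx hy := by
    simp [ha.apply_eq_zero_of_apply_self_eq_zero hx, ha.apply_eq_zero_of_apply_self_eq_zero hy]
  smul_mem' r x hx := by simp [ha.apply_eq_zero_of_apply_self_eq_zero hx]

theorem continuous_apply_self (ha : IsCSPForm a) : Continuous fun φ => a φ φ := by
  obtain ⟨C, hC⟩ := ha.2.2
  exact (a.mkContinuous₂ C hC).continuous.clm_apply continuous_id

theorem isClosed_nullSpace (ha : IsCSPForm a) : IsClosed (ha.nullSpace : Set V) :=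
  isClosed_singleton.preimage ha.continuous_apply_self

instance [CompleteSpace V] (ha : IsCSPForm a) : CompleteSpace ha.nullSpace :=
  ha.isClosed_nullSpace.completeSpace_coe

end IsCSPForm

theorem bijective_of_isCoercive {H : Type*} [NormedAddCommGroup H] [InnerProductSpace ℝ H]
    [CompleteSpace H] {B : H →L[ℝ] H →L[ℝ] ℝ} (hB : IsCoercive B) : Function.Bijective B := by
  have factorization :
      ⇑B = InnerProductSpace.toDual ℝ H ∘ hB.continuousLinearEquivOfBilin := by
    ext u v
    simp
  rw [factorization]
  exact (InnerProductSpace.toDual ℝ H).bijective.comp hB.continuousLinearEquivOfBilin.bijective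

section FormalSystem

variable {V : Type*} [NormedAddCommGroup V] [InnerProductSpace ℝ V]
  (apar aperp : V →ₗ[ℝ] V →ₗ[ℝ] ℝ) (G A : Submodule ℝ V) (ell : V →L[ℝ] ℝ)

/-- The variational equation of the Limit problem (L) on `G`. Membership `p ∈ G` is not part of the
predicate. -/
def SolvesLimitProblem (p : V) : Prop :=
  ∀ ψ ∈ G, aperp p ψ = ell ψ

/-- The two variational equations of the formal `ε = 0` system. Membership `p ∈ G`, `q ∈ A` is not
part of the predicate. -/
def SolvesFormalZeroSystem (p q : V) : Prop :=
  (∀ η ∈ G, aperp p η + aperp q η = ell η) ∧ ∀ ξ ∈ A, apar q ξ = 0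

variable {apar aperp G A}

theorem existsUnique_solvesLimitProblem [CompleteSpace G]
    (hbound : ∃ C : ℝ, ∀ φ ∈ G, ∀ ψ ∈ G, |aperp φ ψ| ≤ C * ‖φ‖ * ‖ψ‖)
    {α : ℝ} (hα : 0 < α) (hcoer : ∀ φ ∈ G, α * ‖φ‖ ^ 2 ≤ aperp φ φ) :
    ∃! p : V, p ∈ G ∧ SolvesLimitProblem aperp G ell p := by
  obtain ⟨C, hC⟩ := hbound
  let B : G →L[ℝ] G →L[ℝ] ℝ :=
    (aperp.domRestrict₁₂ G G).mkContinuous₂ C fun φ ψ => hC φ φ.2 ψ ψ.2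
  have B_apply (φ ψ : G) : B φ ψ = aperp φ ψ := rfl
  have hB : IsCoercive B :=
    ⟨α, hα, fun φ => by simpa [B_apply, pow_two, mul_assoc] using hcoer φ φ.2⟩
  have solves_iff (p : G) : SolvesLimitProblem aperp G ell p ↔ B p = ell.comp G.subtypeL := by
    simp [SolvesLimitProblem, B_apply, ContinuousLinearMap.ext_iff]
  obtain ⟨p, hp, p_unique⟩ := (bijective_of_isCoercive hB).existsUnique (ell.comp G.subtypeL)
  refine ⟨p, ⟨p.2, (solves_iff p).mpr hp⟩, fun p' ⟨hp'G, hp'⟩ => ?_⟩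
  exact congrArg Subtype.val (p_unique ⟨p', hp'G⟩ ((solves_iff ⟨p', hp'G⟩).mp hp'))

variable {ell} in
theorem solvesFormalZeroSystem_iff {p q : V} (hdef : ∀ φ ∈ A, apar φ φ = 0 → φ = 0)
    (hq : q ∈ A) :
    SolvesFormalZeroSystem apar aperp G A ell p q ↔ q = 0 ∧ SolvesLimitProblem aperp G ell p := by
  constructor
  · rintro ⟨perp_eq, par_eq⟩
    obtain rfl : q = 0 := hdef q hq (par_eq q hq)
    exact ⟨rfl, by simpa [SolvesLimitProblem] using perp_eq⟩
  · rintro ⟨rfl, hp⟩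
    exact ⟨by simpa [SolvesLimitProblem] using hp, by simp⟩

theorem formal_zero_system_characterization_general [CompleteSpace G]
    (hbound : ∃ C : ℝ, ∀ φ ∈ G, ∀ ψ ∈ G, |aperp φ ψ| ≤ C * ‖φ‖ * ‖ψ‖)
    {α : ℝ} (hα : 0 < α) (hcoer : ∀ φ ∈ G, α * ‖φ‖ ^ 2 ≤ aperp φ φ)
    (hdef : ∀ φ ∈ A, apar φ φ = 0 → φ = 0) :
    (∀ p q : V, p ∈ G → q ∈ A →
      (SolvesFormalZeroSystem apar aperp G A ell p q ↔
        q = 0 ∧ SolvesLimitProblem aperp G ell p ∧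
          ∀ p' : V, p' ∈ G → SolvesLimitProblem aperp G ell p' → p' = p)) ∧
    ∃! pq : V × V, pq.1 ∈ G ∧ pq.2 ∈ A ∧
      SolvesFormalZeroSystem apar aperp G A ell pq.1 pq.2 := by
  have limit_unique := existsUnique_solvesLimitProblem ell hbound hα hcoer
  refine ⟨fun p q hpG hqA => ?_, ?_⟩
  · rw [solvesFormalZeroSystem_iff hdef hqA]
    refine and_congr_right fun _ => (and_iff_left_of_imp fun hp p' hp'G hp' => ?_).symm
    exact limit_unique.unique ⟨hp'G, hp'⟩ ⟨hpG, hp⟩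
  · obtain ⟨p, ⟨hpG, hp⟩, p_unique⟩ := limit_unique
    have hsol := (solvesFormalZeroSystem_iff hdef A.zero_mem).mpr ⟨rfl, hp⟩
    refine ⟨(p, 0), ⟨hpG, A.zero_mem, hsol⟩, ?_⟩
    rintro ⟨p', q'⟩ ⟨hp'G, hq'A, hsol⟩
    obtain ⟨hq', hp'⟩ := (solvesFormalZeroSystem_iff hdef hq'A).mp hsol
    exact Prod.ext (p_unique p' ⟨hp'G, hp'⟩) hq'

end FormalSystem

/-- a pair (p⁰,q⁰) ∈ G × A satisfies the formal ε = 0 system iff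
q⁰ = 0 and p⁰ is the unique solution of the Limit problem (L); in particular
the ε = 0 system has a unique solution.
Here G = {φ : a∥(φ,φ) = 0} and A = {φ : c(φ,ψ) = 0 ∀ ψ ∈ G}. -/
theorem formal_zero_system_characterization
    {V : Type*} [NormedAddCommGroup V] [InnerProductSpace ℝ V] [CompleteSpace V]
    (apar aperp c : V →ₗ[ℝ] V →ₗ[ℝ] ℝ)
    (hapar : IsCSPForm apar) (haperp : IsCSPForm aperp) (hc : IsCSPForm c)
    (α : ℝ) (hα : 0 < α)
    (hcoer : ∀ φ : V, α * ‖φ‖ ^ 2 ≤ apar φ φ + aperp φ φ)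
    -- Hypothesis B: bounded projection P onto G along A, V = G ⊕ A
    (P : V →L[ℝ] V)
    (hPG : ∀ φ : V, apar (P φ) (P φ) = 0)
    (hPA : ∀ φ : V, ∀ ψ : V, apar ψ ψ = 0 → c (φ - P φ) ψ = 0)
    (hPid : ∀ φ : V, apar φ φ = 0 → P φ = φ)
    (hPzero : ∀ φ : V, (∀ ψ : V, apar ψ ψ = 0 → c φ ψ = 0) → P φ = 0)
    (ell : V →L[ℝ] ℝ) (F₀ : ℝ) (hF₀ : 0 ≤ F₀)
    (hell : ∀ ψ : V, |ell ψ| ≤ F₀ * Real.sqrt (c ψ ψ)) :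
    (∀ p q : V, apar p p = 0 → (∀ ψ : V, apar ψ ψ = 0 → c q ψ = 0) →
      (((∀ η : V, apar η η = 0 → aperp p η + aperp q η = ell η) ∧
        (∀ ξ : V, (∀ ψ : V, apar ψ ψ = 0 → c ξ ψ = 0) → apar q ξ = 0))
       ↔ (q = 0 ∧ (∀ ψ : V, apar ψ ψ = 0 → aperp p ψ = ell ψ) ∧
          (∀ p' : V, apar p' p' = 0 →
            (∀ ψ : V, apar ψ ψ = 0 → aperp p' ψ = ell ψ) → p' = p)))) ∧
    (∃! pq : V × V, apar pq.1 pq.1 = 0 ∧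
      (∀ ψ : V, apar ψ ψ = 0 → c pq.2 ψ = 0) ∧
      (∀ η : V, apar η η = 0 → aperp pq.1 η + aperp pq.2 η = ell η) ∧
      (∀ ξ : V, (∀ ψ : V, apar ψ ψ = 0 → c ξ ψ = 0) → apar pq.2 ξ = 0)) := by
  -- `c.flip`, so that membership in the orthogonal space unfolds to `c φ ψ = 0` in that order.
  exact formal_zero_system_characterization_general ell
    (G := hapar.nullSpace) (A := hapar.nullSpace.orthogonalBilin c.flip)
    (haperp.2.2.imp fun _ hC φ _ ψ _ => hC φ ψ) hα
    (fun φ (hφ : apar φ φ = 0) => by simpa [hφ] using hcoer φ)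
    (fun φ hφA hφG => (hPid φ hφG).symm.trans (hPzero φ hφA))
end

section
/- (Theorem 2.1, part 1.) For every ε ∈ (0,1) the AP formulation admits a unique solution (p^ε,q^ε) ∈ G × A; moreover, a pair (p,q) ∈ G × A solves the AP formulation if and only if φ := p + q is the unique solution of the Singular Perturbation problem (P), p = Pφ and q = φ − Pφ. -/
open LinearMap (ker)

section Algebra

variable {R M : Type*} [CommRing R] [AddCommGroup M] [Module R M]

/-- `φ` solves the singular perturbation problem (P), with `a`, `b`, `l` in the roles of
`a∥`, `a⊥`, `ℓ`. -/
def IsSPSolution (a b : M →ₗ[R] M →ₗ[R] R) (l : M →ₗ[R] R) (ε : R) (φ : M) : Prop :=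
  ∀ ψ, a φ ψ + ε * b φ ψ = ε * l ψ

/-- `(p, q)` satisfies the two equations of the asymptotic-preserving formulation, tested against
`G` and `A` respectively. The constraints `p ∈ G` and `q ∈ A` are not part of the predicate. -/
def IsAPSolution (a b : M →ₗ[R] M →ₗ[R] R) (l : M →ₗ[R] R) (ε : R) (G A : Submodule R M)
    (p q : M) : Prop :=
  (∀ η ∈ G, b p η + b q η = l η) ∧ ∀ ξ ∈ A, a q ξ + ε * b q ξ + ε * b p ξ = ε * l ξ

variable {a b : M →ₗ[R] M →ₗ[R] R} {l : M →ₗ[R] R} {ε : R} {G A : Submodule R M}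

theorem isAPSolution_iff_isSPSolution_add [NoZeroDivisors R] (hGA : Codisjoint G A)
    (hG : G ≤ ker a ⊓ ker a.flip) (hε : ε ≠ 0) {p q : M} (hp : p ∈ G) :
    IsAPSolution a b l ε G A p q ↔ IsSPSolution a b l ε (p + q) := by
  have left_null : ∀ ψ, a p ψ = 0 := fun ψ => DFunLike.congr_fun (hG hp).1 ψ
  have right_null : ∀ η ∈ G, a q η = 0 := fun η hη => DFunLike.congr_fun (hG hη).2 q
  simp only [IsAPSolution, IsSPSolution, map_add, LinearMap.add_apply, left_null, zero_add]
  constructor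
  · rintro ⟨hAP_G, hAP_A⟩ ψ
    obtain ⟨η, ξ, hη, hξ, rfl⟩ := Submodule.codisjoint_iff_exists_add_eq.1 hGA ψ
    simp only [map_add]
    linear_combination hAP_A ξ hξ + ε * hAP_G η hη + right_null η hη
  · refine fun hSP => ⟨fun η hη => mul_left_cancel₀ hε ?_, fun ξ _ => ?_⟩
    · linear_combination hSP η - right_null η hη
    · linear_combination hSP ξ

variable {P : M →ₗ[R] M}

theorem isProj_apply_add_of_mem_ker (hP : LinearMap.IsProj G P) {p q : M} (hp : p ∈ G)
    (hq : q ∈ ker P) : P (p + q) = p := by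
  rw [map_add, hP.map_id p hp, LinearMap.mem_ker.1 hq, add_zero]

theorem existsUnique_isAPSolution [NoZeroDivisors R] (hP : LinearMap.IsProj G P)
    (hG : G ≤ ker a ⊓ ker a.flip) (hε : ε ≠ 0) (hSP : ∃! φ, IsSPSolution a b l ε φ) :
    ∃! pq : M × M, pq.1 ∈ G ∧ pq.2 ∈ ker P ∧ IsAPSolution a b l ε G (ker P) pq.1 pq.2 := by
  have hGA := hP.isCompl.codisjoint
  obtain ⟨φ, hφ, hφ_unique⟩ := hSP
  have hφ_sub : φ - P φ ∈ ker P := by simp [hP.map_id _ (hP.map_mem φ)]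
  have hφ_add : IsSPSolution a b l ε (P φ + (φ - P φ)) := by rwa [add_sub_cancel]
  refine ⟨(P φ, φ - P φ), ⟨hP.map_mem φ, hφ_sub,
    (isAPSolution_iff_isSPSolution_add hGA hG hε (hP.map_mem φ)).2 hφ_add⟩, ?_⟩
  rintro ⟨p, q⟩ ⟨hp, hq, hAP⟩
  obtain rfl := hφ_unique _ ((isAPSolution_iff_isSPSolution_add hGA hG hε hp).1 hAP)
  rw [isProj_apply_add_of_mem_ker hP hp hq, add_sub_cancel_left]

end Algebra

theorem ker_le_ker_flip_of_nonneg {R M : Type*} [CommRing R] [LinearOrder R]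
    [IsStrictOrderedRing R] [AddCommGroup M] [Module R M] {a : M →ₗ[R] M →ₗ[R] R}
    (ha : ∀ x, 0 ≤ a x x) : ker a ≤ ker a.flip := by
  intro x hx
  have hax : a x = 0 := hx
  -- The symmetric part of `a` is nonnegative and vanishes at `(x, x)`, so its kernel contains `x`.
  have hsymm : (a + a.flip).IsSymm := ⟨fun y z => by simp [add_comm]⟩
  have hker : (a + a.flip) x = 0 :=
    (LinearMap.BilinForm.apply_apply_same_eq_zero_iff _ (fun y => add_nonneg (ha y) (ha y)) hsymm).1
      (by simp [hax])
  simpa [hax] using hker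

theorem isCoercive_add_smul {E : Type*} [SeminormedAddCommGroup E] [NormedSpace ℝ E]
    {a b : E →L[ℝ] E →L[ℝ] ℝ} (ha : ∀ x, 0 ≤ a x x) (hb : ∀ x, 0 ≤ b x x)
    (hab : IsCoercive (a + b)) {ε : ℝ} (hε : 0 < ε) : IsCoercive (a + ε • b) := by
  obtain ⟨C, hC, hcoer⟩ := hab
  refine ⟨min 1 ε * C, by positivity, fun x => ?_⟩
  have hax := ha x
  have hbx := hb x
  calc min 1 ε * C * ‖x‖ * ‖x‖ = min 1 ε * (C * ‖x‖ * ‖x‖) := by ring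
    _ ≤ min 1 ε * (a x x + b x x) := by gcongr; exact hcoer x
    _ = min 1 ε * a x x + min 1 ε * b x x := mul_add _ _ _
    _ ≤ 1 * a x x + ε * b x x := by gcongr; exacts [min_le_left _ _, min_le_right _ _]
    _ = (a + ε • b) x x := by simp

section Hilbert

variable {V : Type*} [NormedAddCommGroup V] [InnerProductSpace ℝ V] [CompleteSpace V]

theorem existsUnique_forall_apply_eq_of_isCoercive {B : V →L[ℝ] V →L[ℝ] ℝ} (hB : IsCoercive B)
    (l : V →L[ℝ] ℝ) : ∃! φ, ∀ ψ, B φ ψ = l ψ := by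
  let r : V := (InnerProductSpace.toDual ℝ V).symm l
  have hr : ∀ ψ, inner ℝ r ψ = l ψ := fun ψ => InnerProductSpace.toDual_symm_apply
  refine ⟨hB.continuousLinearEquivOfBilin.symm r, fun ψ => ?_, fun φ hφ => ?_⟩
  · rw [← hB.continuousLinearEquivOfBilin_apply, ContinuousLinearEquiv.apply_symm_apply, hr]
  · rw [ContinuousLinearEquiv.eq_symm_apply]
    exact (hB.unique_continuousLinearEquivOfBilin fun ψ => (hr ψ).trans (hφ ψ).symm).symm

variable {apar aperp : V →ₗ[ℝ] V →ₗ[ℝ] ℝ} {α ε : ℝ}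

theorem existsUnique_isSPSolution
    (hapar_nonneg : ∀ x, 0 ≤ apar x x) (hapar_bdd : ∃ C, ∀ x y, |apar x y| ≤ C * ‖x‖ * ‖y‖)
    (haperp_nonneg : ∀ x, 0 ≤ aperp x x) (haperp_bdd : ∃ C, ∀ x y, |aperp x y| ≤ C * ‖x‖ * ‖y‖)
    (hα : 0 < α) (hcoer : ∀ φ, α * ‖φ‖ ^ 2 ≤ apar φ φ + aperp φ φ)
    (ell : V →L[ℝ] ℝ) (hε : 0 < ε) : ∃! φ, IsSPSolution apar aperp ell ε φ := by
  obtain ⟨C₁, hC₁⟩ := hapar_bdd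
  obtain ⟨C₂, hC₂⟩ := haperp_bdd
  let a := apar.mkContinuous₂ C₁ hC₁
  let b := aperp.mkContinuous₂ C₂ hC₂
  have hab : IsCoercive (a + b) :=
    ⟨α, hα, fun φ => by simpa [a, b, pow_two, mul_assoc] using hcoer φ⟩
  have hB : IsCoercive (a + ε • b) := isCoercive_add_smul hapar_nonneg haperp_nonneg hab hε
  exact existsUnique_forall_apply_eq_of_isCoercive hB (ε • ell)

/-- The space `A` of the AP formulation is encoded as `ker P`, so that it may be any algebraic
complement of `G = ker a∥`. -/
theorem AP_formulation_wellposed_general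
    (hapar_nonneg : ∀ x, 0 ≤ apar x x) (hapar_bdd : ∃ C, ∀ x y, |apar x y| ≤ C * ‖x‖ * ‖y‖)
    (haperp_nonneg : ∀ x, 0 ≤ aperp x x) (haperp_bdd : ∃ C, ∀ x y, |aperp x y| ≤ C * ‖x‖ * ‖y‖)
    (hα : 0 < α) (hcoer : ∀ φ, α * ‖φ‖ ^ 2 ≤ apar φ φ + aperp φ φ)
    {P : V →ₗ[ℝ] V} (hP : LinearMap.IsProj (ker apar) P) (ell : V →L[ℝ] ℝ) (hε : 0 < ε) :
    (∃! pq : V × V, pq.1 ∈ ker apar ∧ pq.2 ∈ ker P ∧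
      IsAPSolution apar aperp ell ε (ker apar) (ker P) pq.1 pq.2) ∧
    ∀ p q : V, p ∈ ker apar → q ∈ ker P →
      (IsAPSolution apar aperp ell ε (ker apar) (ker P) p q ↔
        IsSPSolution apar aperp ell ε (p + q) ∧
          (∀ φ, IsSPSolution apar aperp ell ε φ → φ = p + q) ∧
          p = P (p + q) ∧ q = (p + q) - P (p + q)) := by
  have hG : ker apar ≤ ker apar ⊓ ker apar.flip :=
    le_inf le_rfl (ker_le_ker_flip_of_nonneg hapar_nonneg)
  have hSP : ∃! φ, IsSPSolution apar aperp ell ε φ :=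
    existsUnique_isSPSolution hapar_nonneg hapar_bdd haperp_nonneg haperp_bdd hα hcoer ell hε
  refine ⟨existsUnique_isAPSolution hP hG hε.ne' hSP, fun p q hp hq => ?_⟩
  rw [isAPSolution_iff_isSPSolution_add hP.isCompl.codisjoint hG hε.ne' hp,
    isProj_apply_add_of_mem_ker hP hp hq, add_sub_cancel_left]
  exact ⟨fun h => ⟨h, fun φ hφ => hSP.unique hφ h, rfl, rfl⟩, And.left⟩

end Hilbert

/-- Theorem 2.1, part 1: for every ε ∈ (0,1) the AP formulation
admits a unique solution (p^ε,q^ε) ∈ G × A; moreover (p,q) ∈ G × A solves the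
AP formulation iff φ := p + q is the unique solution of (P), p = Pφ and
q = φ − Pφ. -/
theorem AP_formulation_wellposed
    {V : Type*} [NormedAddCommGroup V] [InnerProductSpace ℝ V] [CompleteSpace V]
    (apar aperp c : V →ₗ[ℝ] V →ₗ[ℝ] ℝ)
    (hapar : IsCSPForm apar) (haperp : IsCSPForm aperp) (hc : IsCSPForm c)
    (α : ℝ) (hα : 0 < α)
    (hcoer : ∀ φ : V, α * ‖φ‖ ^ 2 ≤ apar φ φ + aperp φ φ)
    -- Hypothesis B: bounded projection P onto G along A, V = G ⊕ A
    (P : V →L[ℝ] V)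
    (hPG : ∀ φ : V, apar (P φ) (P φ) = 0)
    (hPA : ∀ φ : V, ∀ ψ : V, apar ψ ψ = 0 → c (φ - P φ) ψ = 0)
    (hPid : ∀ φ : V, apar φ φ = 0 → P φ = φ)
    (hPzero : ∀ φ : V, (∀ ψ : V, apar ψ ψ = 0 → c φ ψ = 0) → P φ = 0)
    (ell : V →L[ℝ] ℝ) (F₀ : ℝ) (hF₀ : 0 ≤ F₀)
    (hell : ∀ ψ : V, |ell ψ| ≤ F₀ * Real.sqrt (c ψ ψ))
    (ε : ℝ) (hε : ε ∈ Set.Ioo (0 : ℝ) 1) :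
    (∃! pq : V × V, apar pq.1 pq.1 = 0 ∧
      (∀ ψ : V, apar ψ ψ = 0 → c pq.2 ψ = 0) ∧
      (∀ η : V, apar η η = 0 → aperp pq.1 η + aperp pq.2 η = ell η) ∧
      (∀ ξ : V, (∀ ψ : V, apar ψ ψ = 0 → c ξ ψ = 0) →
        apar pq.2 ξ + ε * aperp pq.2 ξ + ε * aperp pq.1 ξ = ε * ell ξ)) ∧
    (∀ p q : V, apar p p = 0 → (∀ ψ : V, apar ψ ψ = 0 → c q ψ = 0) →
      (((∀ η : V, apar η η = 0 → aperp p η + aperp q η = ell η) ∧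
        (∀ ξ : V, (∀ ψ : V, apar ψ ψ = 0 → c ξ ψ = 0) →
          apar q ξ + ε * aperp q ξ + ε * aperp p ξ = ε * ell ξ))
       ↔ ((∀ ψ : V, apar (p + q) ψ + ε * aperp (p + q) ψ = ε * ell ψ) ∧
          (∀ φ : V, (∀ ψ : V, apar φ ψ + ε * aperp φ ψ = ε * ell ψ) → φ = p + q) ∧
          p = P (p + q) ∧ q = (p + q) - P (p + q)))) := by
  have hG : ∀ φ, apar φ φ = 0 ↔ φ ∈ ker apar := fun φ =>
    LinearMap.BilinForm.apply_apply_same_eq_zero_iff _ hapar.2.1 ⟨hapar.1⟩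
  simp only [hG] at hPG hPA hPid hPzero ⊢
  have hA : ∀ φ, (∀ ψ ∈ ker apar, c φ ψ = 0) ↔ φ ∈ ker (P : V →ₗ[ℝ] V) := fun φ =>
    ⟨hPzero φ, fun hφ => by simpa [show P φ = 0 from hφ] using hPA φ⟩
  simp only [hA]
  exact AP_formulation_wellposed_general hapar.2.1 hapar.2.2 haperp.2.1 haperp.2.2 hα hcoer
    ⟨hPG, hPid⟩ ell hε.1
end

section
/- (Energy identity, equation (aa1).) Let ε ∈ (0,1), let (p^ε,q^ε) ∈ G × A be the solution of the AP formulation, let φ⁰ ∈ G be the unique solution of the Limit problem (L), and set e^ε := p^ε − φ⁰. Then (1/ε) a∥(q^ε,q^ε) + a⊥(q^ε + e^ε, q^ε + e^ε) = ℓ(q^ε) − a⊥(φ⁰, q^ε). -/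
section WeakFormulations

variable {R V : Type*} [CommRing R] [AddCommGroup V] [Module R V]

/-- The limit problem on the space `G`: a solution is an element of `G` satisfying the
variational equation for every test element of `G`. Only membership in the trial and test space
matters, so it is encoded as a set. -/
structure IsLimitSolution (aperp : LinearMap.BilinForm R V) (ell : Module.Dual R V) (G : Set V)
    (φ₀ : V) : Prop where
  mem : φ₀ ∈ G
  eq_on : ∀ ψ ∈ G, aperp φ₀ ψ = ell ψ

/-- The asymptotic-preserving formulation with parameter `ε`: the solution is split into a component
`p ∈ G` and a component `q ∈ A`, and the two equations are tested on `G` and on `A` respectively. -/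
structure IsAPSolution_s5 (apar aperp : LinearMap.BilinForm R V) (ell : Module.Dual R V)
    (G A : Set V) (ε : R) (p q : V) : Prop where
  fst_mem : p ∈ G
  snd_mem : q ∈ A
  fst_eq : ∀ η ∈ G, aperp p η + aperp q η = ell η
  snd_eq : ∀ ξ ∈ A, apar q ξ + ε * aperp q ξ + ε * aperp p ξ = ε * ell ξ

namespace IsAPSolution_s5

variable {apar aperp : LinearMap.BilinForm R V} {ell : Module.Dual R V} {G A : Set V} {ε : R}
  {p q φ₀ : V}

theorem aperp_add_sub_eq_zero (h : IsAPSolution_s5 apar aperp ell G A ε p q)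
    (h₀ : IsLimitSolution aperp ell G φ₀) {η : V} (hη : η ∈ G) :
    aperp (q + (p - φ₀)) η = 0 := by
  simp only [map_add, map_sub, LinearMap.add_apply, LinearMap.sub_apply]
  linear_combination h.fst_eq η hη - h₀.eq_on η hη

theorem aperp_add_sub_self (h : IsAPSolution_s5 apar aperp ell G A ε p q)
    (h₀ : IsLimitSolution aperp ell G φ₀) :
    aperp (q + (p - φ₀)) (q + (p - φ₀)) = aperp (q + (p - φ₀)) q := by
  rw [map_add (aperp _) q, map_sub, h.aperp_add_sub_eq_zero h₀ h.fst_mem,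
    h.aperp_add_sub_eq_zero h₀ h₀.mem, sub_zero, add_zero]

theorem apar_add_mul_aperp_add_sub_self (h : IsAPSolution_s5 apar aperp ell G A ε p q)
    (h₀ : IsLimitSolution aperp ell G φ₀) :
    apar q q + ε * aperp (q + (p - φ₀)) (q + (p - φ₀)) = ε * (ell q - aperp φ₀ q) := by
  rw [h.aperp_add_sub_self h₀]
  simp only [map_add, map_sub, LinearMap.add_apply, LinearMap.sub_apply]
  linear_combination h.snd_eq q h.snd_mem

end IsAPSolution_s5

end WeakFormulations

theorem energy_identity_general {K V : Type*} [Field K] [AddCommGroup V] [Module K V]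
    {apar aperp : LinearMap.BilinForm K V} {ell : Module.Dual K V} {G A : Set V} {ε : K}
    (hε : ε ≠ 0) {p q φ₀ : V} (h : IsAPSolution_s5 apar aperp ell G A ε p q)
    (h₀ : IsLimitSolution aperp ell G φ₀) :
    (1 / ε) * apar q q + aperp (q + (p - φ₀)) (q + (p - φ₀)) = ell q - aperp φ₀ q := by
  have key := h.apar_add_mul_aperp_add_sub_self h₀
  apply mul_left_cancel₀ hε
  rwa [mul_add, one_div, mul_inv_cancel_left₀ hε]

/-- energy identity, equation (aa1): with (p^ε,q^ε) the AP
solution, φ⁰ the limit solution and e^ε = p^ε − φ⁰, one has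
(1/ε)a∥(q^ε,q^ε) + a⊥(q^ε+e^ε, q^ε+e^ε) = ℓ(q^ε) − a⊥(φ⁰,q^ε). -/
theorem energy_identity
    {V : Type*} [NormedAddCommGroup V] [InnerProductSpace ℝ V] [CompleteSpace V]
    (apar aperp c : V →ₗ[ℝ] V →ₗ[ℝ] ℝ)
    (hapar : IsCSPForm apar) (haperp : IsCSPForm aperp) (hc : IsCSPForm c)
    (α : ℝ) (hα : 0 < α)
    (hcoer : ∀ φ : V, α * ‖φ‖ ^ 2 ≤ apar φ φ + aperp φ φ)
    -- Hypothesis B: bounded projection P onto G along A, V = G ⊕ A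
    (P : V →L[ℝ] V)
    (hPG : ∀ φ : V, apar (P φ) (P φ) = 0)
    (hPA : ∀ φ : V, ∀ ψ : V, apar ψ ψ = 0 → c (φ - P φ) ψ = 0)
    (hPid : ∀ φ : V, apar φ φ = 0 → P φ = φ)
    (hPzero : ∀ φ : V, (∀ ψ : V, apar ψ ψ = 0 → c φ ψ = 0) → P φ = 0)
    (ell : V →L[ℝ] ℝ) (F₀ : ℝ) (hF₀ : 0 ≤ F₀)
    (hell : ∀ ψ : V, |ell ψ| ≤ F₀ * Real.sqrt (c ψ ψ))
    (ε : ℝ) (hε : ε ∈ Set.Ioo (0 : ℝ) 1)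
    -- (p,q) ∈ G × A is the solution of the AP formulation
    (p q : V) (hpG : apar p p = 0)
    (hqA : ∀ ψ : V, apar ψ ψ = 0 → c q ψ = 0)
    (hAP1 : ∀ η : V, apar η η = 0 → aperp p η + aperp q η = ell η)
    (hAP2 : ∀ ξ : V, (∀ ψ : V, apar ψ ψ = 0 → c ξ ψ = 0) →
      apar q ξ + ε * aperp q ξ + ε * aperp p ξ = ε * ell ξ)
    -- φ⁰ ∈ G is the unique solution of the Limit problem (L)
    (φ₀ : V) (hφ₀G : apar φ₀ φ₀ = 0)
    (hφ₀ : ∀ ψ : V, apar ψ ψ = 0 → aperp φ₀ ψ = ell ψ)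
    (hφ₀uniq : ∀ φ' : V, apar φ' φ' = 0 →
      (∀ ψ : V, apar ψ ψ = 0 → aperp φ' ψ = ell ψ) → φ' = φ₀) :
    (1 / ε) * apar q q + aperp (q + (p - φ₀)) (q + (p - φ₀))
      = ell q - aperp φ₀ q :=
  energy_identity_general (ell := ell.toLinearMap) (G := {φ | apar φ φ = 0})
    (A := {ξ | ∀ ψ, apar ψ ψ = 0 → c ξ ψ = 0}) hε.1.ne' ⟨hpG, hqA, hAP1, hAP2⟩ ⟨hφ₀G, hφ₀⟩
end

section
/- (Theorem 2.1, part 3: strong convergence.) Let φ^ε denote the unique solution of (P) for ε ∈ (0,1), p^ε := Pφ^ε, q^ε := φ^ε − Pφ^ε, and let φ⁰ ∈ G be the unique solution of the Limit problem (L). Then φ^ε → φ⁰, p^ε → φ⁰ and q^ε → 0 strongly in V as ε → 0 (i.e. ‖φ^ε − φ⁰‖ → 0, ‖p^ε − φ⁰‖ → 0 and ‖q^ε‖ → 0). -/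
/-!
The perturbed problem is stable uniformly in `ε ∈ (0, 1]`: data `s` produce a solution of norm at
most `‖s‖ / α`. Formally `φ^ε = φ₀ + ε w + ⋯`, where the corrector `w` should solve
`a∥(w, ·) = ℓ - a⊥(φ₀, ·)`. The range of `a∥` need not be closed, so this equation may have no
solution; but its right-hand side vanishes on the kernel `G` of `a∥`, because `φ₀` solves the limit
problem, hence lies in the closure of that range. An approximate corrector `w` is therefore
available, and `φ^ε - φ₀ - ε w` solves the perturbed problem with data
`ℓ - a⊥(φ₀, ·) - a∥(w, ·) - ε a⊥(w, ·)`, which are as small as desired.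
-/

open Filter

open Topology

section Duality

variable {𝕜 E F : Type*} [RCLike 𝕜] [NormedAddCommGroup E] [InnerProductSpace 𝕜 E]
  [CompleteSpace E]

lemma mem_closure_of_forall_apply_eq_zero {S : Submodule 𝕜 (StrongDual 𝕜 E)}
    {r : StrongDual 𝕜 E} (hr : ∀ x, (∀ f ∈ S, f x = 0) → r x = 0) :
    r ∈ closure (S : Set (StrongDual 𝕜 E)) := by
  let D := InnerProductSpace.toDual 𝕜 E
  let K : Submodule 𝕜 E := S.comap D.toLinearEquiv.toLinearMap
  have hmem : D.symm r ∈ Kᗮᗮ := by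
    rw [Submodule.mem_orthogonal']
    intro x hx
    rw [InnerProductSpace.toDual_symm_apply]
    refine hr x fun f hf ↦ ?_
    rw [← InnerProductSpace.toDual_symm_apply]
    exact (Submodule.mem_orthogonal _ _).1 hx _ (by simpa [K, D] using hf)
  rw [Submodule.orthogonal_orthogonal_eq_closure] at hmem
  have hpre : D.symm r ∈ D ⁻¹' closure S := (D.toHomeomorph.preimage_closure S).symm ▸ hmem
  simpa using hpre

lemma mem_closure_range_of_forall_apply_eq_zero [AddCommMonoid F] [Module 𝕜 F]
    {a : F →ₗ[𝕜] StrongDual 𝕜 E} {r : StrongDual 𝕜 E}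
    (hr : ∀ x, (∀ w, a w x = 0) → r x = 0) : r ∈ closure (Set.range a) := by
  rw [← LinearMap.coe_range]
  exact mem_closure_of_forall_apply_eq_zero fun x hx ↦ hr x fun w ↦ hx _ ⟨w, rfl⟩

end Duality

section Perturbation

variable {V : Type*} [SeminormedAddCommGroup V] [NormedSpace ℝ V]

/-- Weak solutions of the singular perturbation problem (P) with parallel form `a`, perpendicular
form `b` and data `ℓ`. The data are a parameter because the remainder of the asymptotic expansion
solves (P) with other data. -/
def IsPerturbedSolution (a b : V →L[ℝ] V →L[ℝ] ℝ) (ℓ : V →L[ℝ] ℝ) (ε : ℝ) (φ : V) : Prop :=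
  ∀ ψ, a φ ψ + ε * b φ ψ = ε * ℓ ψ

/-- Solutions of the limit problem (L), with `a φ φ = 0` encoding membership of `φ` in the
kernel `G` of `a`. -/
def IsLimitSolution_s7 (a b : V →L[ℝ] V →L[ℝ] ℝ) (ℓ : V →L[ℝ] ℝ) (φ : V) : Prop :=
  a φ φ = 0 ∧ ∀ ψ, a ψ ψ = 0 → b φ ψ = ℓ ψ

variable {a b : V →L[ℝ] V →L[ℝ] ℝ} {ℓ : V →L[ℝ] ℝ} {α ε : ℝ} {φ φ₀ : V}

namespace IsPerturbedSolution

lemma mul_norm_le (h : IsPerturbedSolution a b ℓ ε φ) (hε : ε ∈ Set.Ioc 0 1)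
    (hnonneg : ∀ x, 0 ≤ a x x) (hcoer : ∀ x, α * ‖x‖ ^ 2 ≤ a x x + b x x) :
    α * ‖φ‖ ≤ ‖ℓ‖ := by
  obtain ⟨hε₀, hε₁⟩ := hε
  obtain hφ | hφ := (norm_nonneg φ).eq_or_lt
  · simp [← hφ]
  refine le_of_mul_le_mul_right (le_of_mul_le_mul_left ?_ hε₀) hφ
  calc ε * (α * ‖φ‖ * ‖φ‖) = ε * (α * ‖φ‖ ^ 2) := by ring
    _ ≤ ε * (a φ φ + b φ φ) := by gcongr; exact hcoer φ
    _ ≤ a φ φ + ε * b φ φ := by linarith [mul_le_of_le_one_left (hnonneg φ) hε₁]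
    _ = ε * ℓ φ := h φ
    _ ≤ ε * (‖ℓ‖ * ‖φ‖) := by gcongr; exact (le_abs_self _).trans (ℓ.le_opNorm φ)

lemma sub_corrector (h : IsPerturbedSolution a b ℓ ε φ) (hφ₀ : ∀ ψ, a φ₀ ψ = 0) (w : V) :
    IsPerturbedSolution a b (ℓ - b φ₀ - a w - ε • b w) ε (φ - φ₀ - ε • w) := fun ψ ↦ by
  simp only [map_sub, map_smul, sub_apply, smul_apply, smul_eq_mul]
  linear_combination h ψ - hφ₀ ψ

lemma mul_norm_sub_le (h : IsPerturbedSolution a b ℓ ε φ) (hε : ε ∈ Set.Ioc 0 1)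
    (hnonneg : ∀ x, 0 ≤ a x x) (hα : 0 ≤ α) (hcoer : ∀ x, α * ‖x‖ ^ 2 ≤ a x x + b x x)
    (hφ₀ : ∀ ψ, a φ₀ ψ = 0) (w : V) :
    α * ‖φ - φ₀‖ ≤ ‖ℓ - b φ₀ - a w‖ + ε * (‖b w‖ + α * ‖w‖) := by
  calc α * ‖φ - φ₀‖ ≤ α * (‖φ - φ₀ - ε • w‖ + ‖ε • w‖) := by
        gcongr; exact norm_le_norm_sub_add _ _
    _ = α * ‖φ - φ₀ - ε • w‖ + ε * (α * ‖w‖) := by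
        rw [norm_smul, Real.norm_of_nonneg hε.1.le]; ring
    _ ≤ ‖ℓ - b φ₀ - a w - ε • b w‖ + ε * (α * ‖w‖) := by
        gcongr; exact (h.sub_corrector hφ₀ w).mul_norm_le hε hnonneg hcoer
    _ ≤ ‖ℓ - b φ₀ - a w‖ + ‖ε • b w‖ + ε * (α * ‖w‖) := by
        gcongr; exact norm_sub_le _ _
    _ = ‖ℓ - b φ₀ - a w‖ + ε * (‖b w‖ + α * ‖w‖) := by
        rw [norm_smul, Real.norm_of_nonneg hε.1.le]; ring

end IsPerturbedSolution

end Perturbation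

section Convergence

variable {V ι : Type*} [NormedAddCommGroup V] [InnerProductSpace ℝ V] [CompleteSpace V]
  {a b : V →L[ℝ] V →L[ℝ] ℝ} {ℓ : V →L[ℝ] ℝ} {α : ℝ} {φ₀ : V} {l : Filter ι} {ε : ι → ℝ}
  {Φ : ι → V}

lemma IsLimitSolution_s7.residual_mem_closure_range (h : IsLimitSolution_s7 a b ℓ φ₀) :
    ℓ - b φ₀ ∈ closure (Set.range a) :=
  mem_closure_range_of_forall_apply_eq_zero (a := a.toLinearMap) fun ψ hψ ↦ by
    rw [sub_apply, h.2 ψ (hψ ψ), sub_self]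

theorem IsLimitSolution_s7.tendsto_of_isPerturbedSolution (h : IsLimitSolution_s7 a b ℓ φ₀)
    (hsymm : ∀ x y, a x y = a y x) (hnonneg : ∀ x, 0 ≤ a x x)
    (hα : 0 < α) (hcoer : ∀ x, α * ‖x‖ ^ 2 ≤ a x x + b x x)
    (hε : Tendsto ε l (𝓝[>] 0)) (hΦ : ∀ᶠ i in l, IsPerturbedSolution a b ℓ (ε i) (Φ i)) :
    Tendsto Φ l (𝓝 φ₀) := by
  have hker : ∀ ψ, a φ₀ ψ = 0 := DFunLike.congr_fun <|
    (LinearMap.BilinForm.apply_apply_same_eq_zero_iff a.toBilinForm hnonneg ⟨hsymm⟩).1 h.1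
  rw [Metric.tendsto_nhds]
  intro η hη
  obtain ⟨_, ⟨w, rfl⟩, hw⟩ :=
    Metric.mem_closure_iff.1 h.residual_mem_closure_range (α * η) (by positivity)
  rw [dist_eq_norm] at hw
  have hbound : Tendsto (fun i ↦ ‖ℓ - b φ₀ - a w‖ + ε i * (‖b w‖ + α * ‖w‖)) l
      (𝓝 ‖ℓ - b φ₀ - a w‖) := by
    simpa using ((tendsto_nhds_of_tendsto_nhdsWithin hε).mul_const _).const_add _
  have hIoc : ∀ᶠ i in l, ε i ∈ Set.Ioc 0 1 := hε.eventually (Ioc_mem_nhdsGT one_pos)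
  filter_upwards [hbound.eventually_lt_const hw, hIoc, hΦ] with i hi hεi hΦi
  rw [dist_eq_norm]
  refine lt_of_mul_lt_mul_left (lt_of_le_of_lt ?_ hi) hα.le
  exact hΦi.mul_norm_sub_le hεi hnonneg hα.le hcoer hker w

theorem strong_convergence_to_limit_general (h : IsLimitSolution_s7 a b ℓ φ₀)
    (hsymm : ∀ x y, a x y = a y x) (hnonneg : ∀ x, 0 ≤ a x x)
    (hα : 0 < α) (hcoer : ∀ x, α * ‖x‖ ^ 2 ≤ a x x + b x x)
    {P : V →L[ℝ] V} (hP : ∀ x, a x x = 0 → P x = x)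
    (hε : Tendsto ε l (𝓝[>] 0)) (hΦ : ∀ᶠ i in l, IsPerturbedSolution a b ℓ (ε i) (Φ i)) :
    Tendsto (fun i ↦ ‖Φ i - φ₀‖) l (𝓝 0) ∧
    Tendsto (fun i ↦ ‖P (Φ i) - φ₀‖) l (𝓝 0) ∧
    Tendsto (fun i ↦ ‖Φ i - P (Φ i)‖) l (𝓝 0) := by
  have hΦ₀ : Tendsto Φ l (𝓝 φ₀) := h.tendsto_of_isPerturbedSolution hsymm hnonneg hα hcoer hε hΦ
  have hPΦ : Tendsto (fun i ↦ P (Φ i)) l (𝓝 φ₀) := by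
    simpa only [hP φ₀ h.1, Function.comp_def] using (P.continuous.tendsto φ₀).comp hΦ₀
  refine ⟨tendsto_iff_norm_sub_tendsto_zero.1 hΦ₀, tendsto_iff_norm_sub_tendsto_zero.1 hPΦ, ?_⟩
  simpa using (hΦ₀.sub hPΦ).norm

end Convergence

/-- Theorem 2.1, part 3: strong convergence φ^ε → φ⁰,
p^ε = Pφ^ε → φ⁰ and q^ε = φ^ε − Pφ^ε → 0 in V as ε → 0. -/
theorem strong_convergence_to_limit
    {V : Type*} [NormedAddCommGroup V] [InnerProductSpace ℝ V] [CompleteSpace V]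
    (apar aperp c : V →ₗ[ℝ] V →ₗ[ℝ] ℝ)
    (hapar : IsCSPForm apar) (haperp : IsCSPForm aperp) (hc : IsCSPForm c)
    (α : ℝ) (hα : 0 < α)
    (hcoer : ∀ φ : V, α * ‖φ‖ ^ 2 ≤ apar φ φ + aperp φ φ)
    -- Hypothesis B: bounded projection P onto G along A, V = G ⊕ A
    (P : V →L[ℝ] V)
    (hPG : ∀ φ : V, apar (P φ) (P φ) = 0)
    (hPA : ∀ φ : V, ∀ ψ : V, apar ψ ψ = 0 → c (φ - P φ) ψ = 0)
    (hPid : ∀ φ : V, apar φ φ = 0 → P φ = φ)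
    (hPzero : ∀ φ : V, (∀ ψ : V, apar ψ ψ = 0 → c φ ψ = 0) → P φ = 0)
    -- Poincaré–Wirtinger inequality on A
    (CW : ℝ) (hCW : 0 < CW)
    (hPW : ∀ q : V, (∀ ψ : V, apar ψ ψ = 0 → c q ψ = 0) →
      c q q ≤ CW ^ 2 * apar q q)
    (ell : V →L[ℝ] ℝ) (F₀ : ℝ) (hF₀ : 0 ≤ F₀)
    (hell : ∀ ψ : V, |ell ψ| ≤ F₀ * Real.sqrt (c ψ ψ))
    -- Φ ε is the (unique) solution of (P) for each ε ∈ (0,1)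
    (Φ : ℝ → V)
    (hΦ : ∀ ε ∈ Set.Ioo (0 : ℝ) 1, ∀ ψ : V,
      apar (Φ ε) ψ + ε * aperp (Φ ε) ψ = ε * ell ψ)
    -- φ⁰ ∈ G is the unique solution of the Limit problem (L)
    (φ₀ : V) (hφ₀G : apar φ₀ φ₀ = 0)
    (hφ₀ : ∀ ψ : V, apar ψ ψ = 0 → aperp φ₀ ψ = ell ψ)
    (hφ₀uniq : ∀ φ' : V, apar φ' φ' = 0 →
      (∀ ψ : V, apar ψ ψ = 0 → aperp φ' ψ = ell ψ) → φ' = φ₀) :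
    Tendsto (fun ε : ℝ => ‖Φ ε - φ₀‖) (nhdsWithin 0 (Set.Ioo 0 1)) (nhds 0) ∧
    Tendsto (fun ε : ℝ => ‖P (Φ ε) - φ₀‖) (nhdsWithin 0 (Set.Ioo 0 1)) (nhds 0) ∧
    Tendsto (fun ε : ℝ => ‖Φ ε - P (Φ ε)‖) (nhdsWithin 0 (Set.Ioo 0 1)) (nhds 0) := by
  obtain ⟨hsymm, hnonneg, C, hC⟩ := hapar
  obtain ⟨-, -, D, hD⟩ := haperp
  exact strong_convergence_to_limit_general (a := apar.mkContinuous₂ C hC)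
    (b := aperp.mkContinuous₂ D hD) ⟨hφ₀G, hφ₀⟩ hsymm hnonneg hα hcoer hPid
    (tendsto_id'.2 (nhdsWithin_mono 0 Set.Ioo_subset_Ioi_self))
    (eventually_mem_nhdsWithin.mono hΦ)
end

section
/- (Proposition 2.3, uniqueness.) Assume in addition that ι(V) is dense in Ṽ. Then for every ε ∈ (0,1) the full AP system has at most one solution; equivalently, if (p, λ, q, l, μ) ∈ V × L × V × V × L solves the full AP system with ℓ = 0, then p = 0, q = 0, l = 0, λ = 0 and μ = 0. -/
open LinearMap (ker)

section Forms

variable {R V : Type*} [CommRing R] [LinearOrder R] [IsStrictOrderedRing R]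
  [AddCommGroup V] [Module R V] {a b : V →ₗ[R] V →ₗ[R] R}

lemma mem_ker_iff_apply_self_eq_zero (ha : a.IsPosSemidef) {x : V} : x ∈ ker a ↔ a x x = 0 :=
  (LinearMap.BilinForm.apply_apply_same_eq_zero_iff a ha.nonneg ha.isSymm).symm

lemma eq_zero_of_apply_self_add_mul_apply_self_eq_zero (ha : a.IsPosSemidef)
    (hb : b.IsPosSemidef) (hab : Disjoint (ker a) (ker b)) {ε : R} (hε : 0 < ε) {x : V}
    (hx : a x x + ε * b x x = 0) : x = 0 := by
  obtain ⟨hax, hεbx⟩ :=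
    (add_eq_zero_iff_of_nonneg (ha.nonneg x) (mul_nonneg hε.le (hb.nonneg x))).mp hx
  have hbx : b x x = 0 := (mul_eq_zero.mp hεbx).resolve_left hε.ne'
  exact Submodule.disjoint_def.mp hab x ((mem_ker_iff_apply_self_eq_zero ha).mpr hax)
    ((mem_ker_iff_apply_self_eq_zero hb).mpr hbx)

end Forms

section Pullback

variable {R V W : Type*} [CommRing R] [AddCommGroup V] [Module R V] [AddCommGroup W] [Module R W]
  {a : V →ₗ[R] V →ₗ[R] R} {ta : W →ₗ[R] W →ₗ[R] R}

lemma mem_ker_of_forall_mem_apply_eq_zero (hta : ta.IsSymm) {L : Submodule R W}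
    (hL : Codisjoint (ker ta) L) {u : W} (hu : ∀ κ ∈ L, ta u κ = 0) : u ∈ ker ta := by
  refine LinearMap.mem_ker.mpr (LinearMap.ext fun w => ?_)
  obtain ⟨g, κ, hg, hκ, rfl⟩ := Submodule.codisjoint_iff_exists_add_eq.mp hL w
  have hug : ta u g = 0 := hta.isRefl g u (LinearMap.congr_fun (LinearMap.mem_ker.mp hg) u)
  simp only [map_add, hug, hu κ hκ, add_zero, LinearMap.zero_apply]

lemma mem_ker_of_map_mem_ker {ι : V → W} (hι : ∀ φ ψ, ta (ι φ) (ι ψ) = a φ ψ) {φ : V}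
    (hφ : ι φ ∈ ker ta) : φ ∈ ker a :=
  LinearMap.mem_ker.mpr <| LinearMap.ext fun ψ =>
    (hι φ ψ).symm.trans (LinearMap.congr_fun (LinearMap.mem_ker.mp hφ) (ι ψ))

lemma isPosSemidef_of_apply_map_eq [LE R] (hta : ta.IsPosSemidef) {ι : V → W}
    (hι : ∀ φ ψ, ta (ι φ) (ι ψ) = a φ ψ) : a.IsPosSemidef where
  eq φ ψ := by simpa only [hι] using hta.eq (ι φ) (ι ψ)
  nonneg φ := hι φ φ ▸ hta.nonneg (ι φ)

lemma map_mem_ker_of_mem_ker [LinearOrder R] [IsStrictOrderedRing R] (hta : ta.IsPosSemidef)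
    {ι : V → W} (hι : ∀ φ ψ, ta (ι φ) (ι ψ) = a φ ψ) {φ : V} (hφ : φ ∈ ker a) : ι φ ∈ ker ta :=
  (mem_ker_iff_apply_self_eq_zero hta).mpr <|
    (hι φ φ).trans (LinearMap.congr_fun (LinearMap.mem_ker.mp hφ) φ)

end Pullback

/-- `(p, λ, q, l, μ)` solves the full AP system with right-hand side `ℓ`. The unknown `p` is the
macroscopic part of the solution and `q` its microscopic part; `l` is the multiplier for the
constraint that `q` be `c`-orthogonal to `ker a∥`, while `λ` and `μ`, written `lam` and `mu`, are
the multipliers for `p ∈ ker a∥` and `l ∈ ker a∥`. The form `ã` is written `ta`. -/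
structure IsFullAPSolution {R V W : Type*} [CommRing R] [AddCommGroup V] [Module R V]
    [AddCommGroup W] [Module R W] (apar aperp c : V →ₗ[R] V →ₗ[R] R) (ta : W →ₗ[R] W →ₗ[R] R)
    (ι : V →ₗ[R] W) (L : Submodule R W) (ε : R) (ℓ : Module.Dual R V)
    (p : V) (lam : W) (q l : V) (mu : W) : Prop where
  lam_mem : lam ∈ L
  mu_mem : mu ∈ L
  macro_eq : ∀ η, aperp p η + aperp q η + ta (ι η) lam = ℓ η
  macro_constraint : ∀ κ ∈ L, ta (ι p) κ = 0
  micro_eq : ∀ ξ, apar q ξ + ε * aperp q ξ + ε * aperp p ξ + c l ξ = ε * ℓ ξ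
  micro_constraint : ∀ χ, c q χ + ta (ι χ) mu = 0
  multiplier_constraint : ∀ τ ∈ L, ta (ι l) τ = 0

namespace IsFullAPSolution

variable {R V W : Type*} [CommRing R] [AddCommGroup V] [Module R V] [AddCommGroup W] [Module R W]
  {apar aperp c : V →ₗ[R] V →ₗ[R] R} {ta : W →ₗ[R] W →ₗ[R] R} {ι : V →ₗ[R] W}
  {L : Submodule R W} {ε : R} {ℓ : Module.Dual R V} {p q l : V} {lam mu : W}

lemma sub {ℓ₁ ℓ₂ : Module.Dual R V} {p₁ q₁ l₁ p₂ q₂ l₂ : V} {lam₁ mu₁ lam₂ mu₂ : W}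
    (h₁ : IsFullAPSolution apar aperp c ta ι L ε ℓ₁ p₁ lam₁ q₁ l₁ mu₁)
    (h₂ : IsFullAPSolution apar aperp c ta ι L ε ℓ₂ p₂ lam₂ q₂ l₂ mu₂) :
    IsFullAPSolution apar aperp c ta ι L ε (ℓ₁ - ℓ₂)
      (p₁ - p₂) (lam₁ - lam₂) (q₁ - q₂) (l₁ - l₂) (mu₁ - mu₂) where
  lam_mem := L.sub_mem h₁.lam_mem h₂.lam_mem
  mu_mem := L.sub_mem h₁.mu_mem h₂.mu_mem
  macro_eq η := by
    simp only [map_sub, LinearMap.sub_apply]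
    linear_combination h₁.macro_eq η - h₂.macro_eq η
  macro_constraint κ hκ := by
    simp only [map_sub, LinearMap.sub_apply, h₁.macro_constraint κ hκ, h₂.macro_constraint κ hκ,
      sub_zero]
  micro_eq ξ := by
    simp only [map_sub, LinearMap.sub_apply]
    linear_combination h₁.micro_eq ξ - h₂.micro_eq ξ
  micro_constraint χ := by
    simp only [map_sub, LinearMap.sub_apply]
    linear_combination h₁.micro_constraint χ - h₂.micro_constraint χ
  multiplier_constraint τ hτ := by
    simp only [map_sub, LinearMap.sub_apply, h₁.multiplier_constraint τ hτ,
      h₂.multiplier_constraint τ hτ, sub_zero]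

lemma macro_mem_ker (h : IsFullAPSolution apar aperp c ta ι L ε ℓ p lam q l mu)
    (hta : ta.IsSymm) (hι : ∀ φ ψ, ta (ι φ) (ι ψ) = apar φ ψ) (hL : Codisjoint (ker ta) L) :
    p ∈ ker apar :=
  mem_ker_of_map_mem_ker hι (mem_ker_of_forall_mem_apply_eq_zero hta hL h.macro_constraint)

lemma multiplier_mem_ker (h : IsFullAPSolution apar aperp c ta ι L ε ℓ p lam q l mu)
    (hta : ta.IsSymm) (hι : ∀ φ ψ, ta (ι φ) (ι ψ) = apar φ ψ) (hL : Codisjoint (ker ta) L) :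
    l ∈ ker apar :=
  mem_ker_of_map_mem_ker hι (mem_ker_of_forall_mem_apply_eq_zero hta hL h.multiplier_constraint)

variable [LinearOrder R] [IsStrictOrderedRing R]

lemma micro_mem_orthogonal (h : IsFullAPSolution apar aperp c ta ι L ε ℓ p lam q l mu)
    (hta : ta.IsPosSemidef) (hc : c.IsSymm) (hι : ∀ φ ψ, ta (ι φ) (ι ψ) = apar φ ψ) :
    q ∈ (ker apar).orthogonalBilin c := by
  refine Submodule.mem_orthogonalBilin_iff.mpr fun ψ hψ => hc.isRefl q ψ ?_
  have hιψ : ta (ι ψ) mu = 0 :=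
    LinearMap.congr_fun (LinearMap.mem_ker.mp (map_mem_ker_of_mem_ker hta hι hψ)) mu
  simpa only [hιψ, add_zero] using h.micro_constraint ψ

lemma multiplier_eq_zero (h : IsFullAPSolution apar aperp c ta ι L ε ℓ p lam q l mu)
    (hta : ta.IsPosSemidef) (hc : c.IsPosSemidef) (hι : ∀ φ ψ, ta (ι φ) (ι ψ) = apar φ ψ)
    (hGA : Disjoint (ker apar) ((ker apar).orthogonalBilin c)) (hL : Codisjoint (ker ta) L) :
    l = 0 := by
  have hl : l ∈ ker apar := h.multiplier_mem_ker hta.isSymm hι hL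
  have hlam : ta (ι l) lam = 0 :=
    LinearMap.congr_fun (LinearMap.mem_ker.mp (map_mem_ker_of_mem_ker hta hι hl)) lam
  have hql : apar q l = 0 := (isPosSemidef_of_apply_map_eq hta hι).isSymm.isRefl l q
    (LinearMap.congr_fun (LinearMap.mem_ker.mp hl) q)
  have hcll : c l l = 0 := by
    linear_combination h.micro_eq l - ε * h.macro_eq l - hql + ε * hlam
  have hcl : c l = 0 := LinearMap.mem_ker.mp ((mem_ker_iff_apply_self_eq_zero hc).mpr hcll)
  exact Submodule.disjoint_def.mp hGA l hl <| Submodule.mem_orthogonalBilin_iff.mpr fun ψ _ =>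
    hc.isSymm.isRefl l ψ (LinearMap.congr_fun hcl ψ)

lemma singular_perturbation_eq (h : IsFullAPSolution apar aperp c ta ι L ε ℓ p lam q l mu)
    (hta : ta.IsPosSemidef) (hc : c.IsPosSemidef) (hι : ∀ φ ψ, ta (ι φ) (ι ψ) = apar φ ψ)
    (hGA : Disjoint (ker apar) ((ker apar).orthogonalBilin c)) (hL : Codisjoint (ker ta) L)
    (ξ : V) : apar (p + q) ξ + ε * aperp (p + q) ξ = ε * ℓ ξ := by
  have hp : apar p = 0 := LinearMap.mem_ker.mp (h.macro_mem_ker hta.isSymm hι hL)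
  have hl : c l ξ = 0 := by
    rw [h.multiplier_eq_zero hta hc hι hGA hL, map_zero, LinearMap.zero_apply]
  simp only [map_add, LinearMap.add_apply, hp, LinearMap.zero_apply]
  linear_combination h.micro_eq ξ - hl

lemma macro_eq_zero_and_micro_eq_zero
    (h : IsFullAPSolution apar aperp c ta ι L ε 0 p lam q l mu) (haperp : aperp.IsPosSemidef)
    (hta : ta.IsPosSemidef) (hc : c.IsPosSemidef) (hι : ∀ φ ψ, ta (ι φ) (ι ψ) = apar φ ψ)
    (hker : Disjoint (ker apar) (ker aperp))
    (hGA : Disjoint (ker apar) ((ker apar).orthogonalBilin c)) (hL : Codisjoint (ker ta) L)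
    (hε : 0 < ε) : p = 0 ∧ q = 0 := by
  have hpq : p + q = 0 :=
    eq_zero_of_apply_self_add_mul_apply_self_eq_zero (isPosSemidef_of_apply_map_eq hta hι)
      haperp hker hε <| by
        simpa only [LinearMap.zero_apply, mul_zero] using
          h.singular_perturbation_eq hta hc hι hGA hL (p + q)
  have hqG : q ∈ ker apar :=
    eq_neg_of_add_eq_zero_right hpq ▸ neg_mem (h.macro_mem_ker hta.isSymm hι hL)
  have hq : q = 0 :=
    Submodule.disjoint_def.mp hGA q hqG (h.micro_mem_orthogonal hta hc.isSymm hι)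
  exact ⟨by simpa only [hq, add_zero] using hpq, hq⟩

end IsFullAPSolution

lemma eq_zero_of_denseRange_of_apply_eq_zero {R W X : Type*} [CommRing R] [TopologicalSpace R]
    [T2Space R] [AddCommGroup W] [Module R W] [TopologicalSpace W] {ta : W →ₗ[R] W →ₗ[R] R}
    (hta : ta.IsSymm) {L : Submodule R W} (hL : Disjoint (ker ta) L) {ι : X → W}
    (hι : DenseRange ι) {w : W} (hcont : Continuous (ta w)) (hw : w ∈ L)
    (horth : ∀ x, ta (ι x) w = 0) : w = 0 := by
  have hzero : ta w = 0 := DFunLike.coe_injective <|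
    hι.equalizer hcont continuous_const (funext fun x => hta.isRefl (ι x) w (horth x))
  exact Submodule.disjoint_def.mp hL w (LinearMap.mem_ker.mpr hzero) hw

section Uniqueness

variable {R V W : Type*} [CommRing R] [LinearOrder R] [IsStrictOrderedRing R]
  [TopologicalSpace R] [T2Space R] [AddCommGroup V] [Module R V] [AddCommGroup W] [Module R W]
  [TopologicalSpace W] {apar aperp c : V →ₗ[R] V →ₗ[R] R} {ta : W →ₗ[R] W →ₗ[R] R}
  {ι : V →ₗ[R] W} {L : Submodule R W} {ε : R}

lemma IsFullAPSolution.eq_zero {p q l : V} {lam mu : W}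
    (h : IsFullAPSolution apar aperp c ta ι L ε 0 p lam q l mu)
    (haperp : aperp.IsPosSemidef) (hc : c.IsPosSemidef) (hta : ta.IsPosSemidef)
    (hker : Disjoint (ker apar) (ker aperp))
    (hGA : Disjoint (ker apar) ((ker apar).orthogonalBilin c)) (hL : IsCompl (ker ta) L)
    (hι : ∀ φ ψ, ta (ι φ) (ι ψ) = apar φ ψ) (hdense : DenseRange ι)
    (hcont : ∀ w, Continuous (ta w)) (hε : 0 < ε) :
    p = 0 ∧ lam = 0 ∧ q = 0 ∧ l = 0 ∧ mu = 0 := by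
  obtain ⟨hp, hq⟩ :=
    h.macro_eq_zero_and_micro_eq_zero haperp hta hc hι hker hGA hL.codisjoint hε
  have hlam : lam = 0 :=
    eq_zero_of_denseRange_of_apply_eq_zero hta.isSymm hL.disjoint hdense (hcont lam) h.lam_mem
      fun η => by simpa [hp, hq] using h.macro_eq η
  have hmu : mu = 0 :=
    eq_zero_of_denseRange_of_apply_eq_zero hta.isSymm hL.disjoint hdense (hcont mu) h.mu_mem
      fun χ => by simpa [hq] using h.micro_constraint χ
  exact ⟨hp, hlam, hq, h.multiplier_eq_zero hta hc hι hGA hL.codisjoint, hmu⟩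

theorem full_AP_system_uniqueness_general
    (haperp : aperp.IsPosSemidef) (hc : c.IsPosSemidef) (hta : ta.IsPosSemidef)
    (hker : Disjoint (ker apar) (ker aperp))
    (hGA : Disjoint (ker apar) ((ker apar).orthogonalBilin c)) (hL : IsCompl (ker ta) L)
    (hι : ∀ φ ψ, ta (ι φ) (ι ψ) = apar φ ψ) (hdense : DenseRange ι)
    (hcont : ∀ w, Continuous (ta w)) (hε : 0 < ε) {ℓ : Module.Dual R V}
    {p₁ q₁ l₁ p₂ q₂ l₂ : V} {lam₁ mu₁ lam₂ mu₂ : W}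
    (h₁ : IsFullAPSolution apar aperp c ta ι L ε ℓ p₁ lam₁ q₁ l₁ mu₁)
    (h₂ : IsFullAPSolution apar aperp c ta ι L ε ℓ p₂ lam₂ q₂ l₂ mu₂) :
    p₁ = p₂ ∧ lam₁ = lam₂ ∧ q₁ = q₂ ∧ l₁ = l₂ ∧ mu₁ = mu₂ := by
  have hsub := h₁.sub h₂
  rw [sub_self] at hsub
  simpa only [sub_eq_zero] using hsub.eq_zero haperp hc hta hker hGA hL hι hdense hcont hε

end Uniqueness

section InnerProductSpace

variable {V : Type*} [NormedAddCommGroup V] [InnerProductSpace ℝ V] {a b c : V →ₗ[ℝ] V →ₗ[ℝ] ℝ}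

lemma IsCSPForm.isPosSemidef (ha : IsCSPForm a) : a.IsPosSemidef where
  eq := ha.1
  nonneg := ha.2.1

lemma IsCSPForm.mem_ker_iff (ha : IsCSPForm a) {x : V} : x ∈ ker a ↔ a x x = 0 :=
  mem_ker_iff_apply_self_eq_zero ha.isPosSemidef

lemma IsCSPForm.continuous_apply (ha : IsCSPForm a) (x : V) : Continuous (a x) := by
  obtain ⟨C, hC⟩ := ha.2.2
  exact AddMonoidHomClass.continuous_of_bound (a x) (C * ‖x‖) (hC x)

lemma disjoint_ker_of_coercive {α : ℝ} (hα : 0 < α)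
    (hcoer : ∀ φ, α * ‖φ‖ ^ 2 ≤ a φ φ + b φ φ) : Disjoint (ker a) (ker b) := by
  refine Submodule.disjoint_def.mpr fun φ ha hb => ?_
  have hle : α * ‖φ‖ ^ 2 ≤ 0 := by
    simpa only [LinearMap.mem_ker.mp ha, LinearMap.mem_ker.mp hb, LinearMap.zero_apply,
      add_zero] using hcoer φ
  have hsq : ‖φ‖ ^ 2 = 0 := le_antisymm (nonpos_of_mul_nonpos_right hle hα) (sq_nonneg _)
  exact norm_eq_zero.mp (pow_eq_zero_iff two_ne_zero |>.mp hsq)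

lemma IsCSPForm.disjoint_ker_orthogonal_of_projection (ha : IsCSPForm a) (hc : c.IsSymm)
    {P : V → V} (hPid : ∀ φ, a φ φ = 0 → P φ = φ)
    (hPzero : ∀ φ, (∀ ψ, a ψ ψ = 0 → c φ ψ = 0) → P φ = 0) :
    Disjoint (ker a) ((ker a).orthogonalBilin c) :=
  Submodule.disjoint_def.mpr fun φ hG hA =>
    (hPid φ (ha.mem_ker_iff.mp hG)).symm.trans <| hPzero φ fun ψ hψ =>
      hc.isRefl ψ φ (hA ψ (ha.mem_ker_iff.mpr hψ))

lemma IsCSPForm.isCompl_ker (ha : IsCSPForm a) {L : Submodule ℝ V}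
    (hdecomp : ∀ u, ∃ g k, a g g = 0 ∧ k ∈ L ∧ u = g + k)
    (hinter : ∀ u, a u u = 0 → u ∈ L → u = 0) : IsCompl (ker a) L where
  disjoint := Submodule.disjoint_def.mpr fun u hu => hinter u (ha.mem_ker_iff.mp hu)
  codisjoint := Submodule.codisjoint_iff_exists_add_eq.mpr fun u =>
    let ⟨g, k, hg, hk, hu⟩ := hdecomp u
    ⟨g, k, ha.mem_ker_iff.mpr hg, hk, hu.symm⟩

end InnerProductSpace

/-- Proposition 2.3, uniqueness: assuming moreover that ι(V)
is dense in Ṽ, for every ε ∈ (0,1) the full AP system has at most one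
solution. -/
theorem full_AP_system_uniqueness
    {V : Type*} [NormedAddCommGroup V] [InnerProductSpace ℝ V] [CompleteSpace V]
    {W : Type*} [NormedAddCommGroup W] [InnerProductSpace ℝ W] [CompleteSpace W]
    (apar aperp c : V →ₗ[ℝ] V →ₗ[ℝ] ℝ)
    (hapar : IsCSPForm apar) (haperp : IsCSPForm aperp) (hc : IsCSPForm c)
    (α : ℝ) (hα : 0 < α)
    (hcoer : ∀ φ : V, α * ‖φ‖ ^ 2 ≤ apar φ φ + aperp φ φ)
    -- Hypothesis B: bounded projection P onto G along A, V = G ⊕ A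
    (P : V →L[ℝ] V)
    (hPG : ∀ φ : V, apar (P φ) (P φ) = 0)
    (hPA : ∀ φ : V, ∀ ψ : V, apar ψ ψ = 0 → c (φ - P φ) ψ = 0)
    (hPid : ∀ φ : V, apar φ φ = 0 → P φ = φ)
    (hPzero : ∀ φ : V, (∀ ψ : V, apar ψ ψ = 0 → c φ ψ = 0) → P φ = 0)
    (ell : V →L[ℝ] ℝ) (F₀ : ℝ) (hF₀ : 0 ≤ F₀)
    (hell : ∀ ψ : V, |ell ψ| ≤ F₀ * Real.sqrt (c ψ ψ))
    -- Lagrange-multiplier framework on Ṽ = W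
    (ta : W →ₗ[ℝ] W →ₗ[ℝ] ℝ) (hta : IsCSPForm ta)
    (L : Submodule ℝ W) (hLclosed : IsClosed (L : Set W))
    -- Hypothesis B': Ṽ = G̃ ⊕ L
    (hdecomp : ∀ u : W, ∃ g lam : W, ta g g = 0 ∧ lam ∈ L ∧ u = g + lam)
    (hinter : ∀ u : W, ta u u = 0 → u ∈ L → u = 0)
    -- Embedding ι : V → Ṽ, with dense range
    (ι : V →L[ℝ] W) (hι : Function.Injective ι)
    (hιa : ∀ φ ψ : V, ta (ι φ) (ι ψ) = apar φ ψ)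
    (hdense : DenseRange ι)
    (ε : ℝ) (hε : ε ∈ Set.Ioo (0 : ℝ) 1)
    -- two solutions of the full AP system
    (p₁ q₁ l₁ : V) (lam₁ mu₁ : W) (hlam₁ : lam₁ ∈ L) (hmu₁ : mu₁ ∈ L)
    (h₁1 : ∀ η : V, aperp p₁ η + aperp q₁ η + ta (ι η) lam₁ = ell η)
    (h₁2 : ∀ κ ∈ L, ta (ι p₁) κ = 0)
    (h₁3 : ∀ ξ : V, apar q₁ ξ + ε * aperp q₁ ξ + ε * aperp p₁ ξ + c l₁ ξ
      = ε * ell ξ)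
    (h₁4 : ∀ χ : V, c q₁ χ + ta (ι χ) mu₁ = 0)
    (h₁5 : ∀ τ ∈ L, ta (ι l₁) τ = 0)
    (p₂ q₂ l₂ : V) (lam₂ mu₂ : W) (hlam₂ : lam₂ ∈ L) (hmu₂ : mu₂ ∈ L)
    (h₂1 : ∀ η : V, aperp p₂ η + aperp q₂ η + ta (ι η) lam₂ = ell η)
    (h₂2 : ∀ κ ∈ L, ta (ι p₂) κ = 0)
    (h₂3 : ∀ ξ : V, apar q₂ ξ + ε * aperp q₂ ξ + ε * aperp p₂ ξ + c l₂ ξ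
      = ε * ell ξ)
    (h₂4 : ∀ χ : V, c q₂ χ + ta (ι χ) mu₂ = 0)
    (h₂5 : ∀ τ ∈ L, ta (ι l₂) τ = 0) :
    p₁ = p₂ ∧ lam₁ = lam₂ ∧ q₁ = q₂ ∧ l₁ = l₂ ∧ mu₁ = mu₂ :=
  full_AP_system_uniqueness_general (ι := (ι : V →ₗ[ℝ] W)) (ℓ := (ell : V →ₗ[ℝ] ℝ))
    haperp.isPosSemidef hc.isPosSemidef hta.isPosSemidef (disjoint_ker_of_coercive hα hcoer)
    (hapar.disjoint_ker_orthogonal_of_projection hc.isPosSemidef.isSymm hPid hPzero)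
    (hta.isCompl_ker hdecomp hinter) hιa hdense hta.continuous_apply hε.1
    ⟨hlam₁, hmu₁, h₁1, h₁2, h₁3, h₁4, h₁5⟩ ⟨hlam₂, hmu₂, h₂1, h₂2, h₂3, h₂4, h₂5⟩
end

section
/- (Proposition 2.4, uniform bound on the Lagrange multiplier.) Let φ⁰ ∈ G be the unique solution of the Limit problem (L), and suppose there is a constant K ≥ 0 such that |ℓ(q) − a⊥(φ⁰, q)| ≤ K √(a∥(q,q)) for all q ∈ A (in the paper this holds with K = C·max(‖f‖_{L²}, ‖φ⁰‖_{H²}) when φ⁰ ∈ H²(Ω)). Then for every ε ∈ (0,1): a∥(q^ε, q^ε) ≤ ε² K², where (p^ε,q^ε) is the solution of the AP formulation; consequently, if λ^ε ∈ L satisfies ã(η, λ^ε) = (1/ε) ã(ι q^ε, η) for all η ∈ Ṽ (the Lagrange multiplier of the full AP system), then ã(λ^ε, λ^ε) ≤ K², a bound independent of ε. -/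
/-!
The error `u = p + q - φ₀` satisfies `a⊥(u, η) = 0` for `η ∈ G`. Both `p` and `φ₀` lie in `G`, so
`a⊥(u,u) = a⊥(u,q)`, and testing the second AP equation with `q` gives the energy identity
`a∥(q,q) + ε a⊥(u,u) = ε (ℓ(q) - a⊥(φ₀,q))`, whose right-hand side is at most `ε K √(a∥(q,q))`.
Since `a⊥(u,u) ≥ 0`, this bounds `√(a∥(q,q))` by `ε K`. The multiplier equation, tested with `λ`
and with `ι q`, turns this into the bound on `ã(λ,λ) = a∥(q,q) / ε²`.
-/

theorem le_sq_of_le_mul_sqrt {x b : ℝ} (h : x ≤ b * √x) : x ≤ b ^ 2 := by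
  rcases le_total x 0 with hx | hx
  · exact hx.trans (sq_nonneg b)
  · linarith [two_mul_le_add_sq b √x, Real.sq_sqrt hx]

theorem apply_self_eq_sq_mul_of_forall_apply_eq {R M : Type*} [CommSemiring R]
    [AddCommMonoid M] [Module R M] {B : M →ₗ[R] M →ₗ[R] R} {k : R} {v w : M}
    (h : ∀ x, B x w = k * B v x) : B w w = k ^ 2 * B v v := by
  rw [h w, h v, ← mul_assoc, sq]

section AsymptoticPreserving

variable {V : Type*} [AddCommGroup V] [Module ℝ V]

/-- `φ₀` solves the Limit problem (L): `φ₀ ∈ G` and `a⊥(φ₀, ψ) = ℓ(ψ)` for all `ψ ∈ G`.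
In the paper `G` is the space of `φ` with `a∥(φ, φ) = 0`; here it may be any set. -/
structure IsLimitSolution_s13 (aperp : V →ₗ[ℝ] V →ₗ[ℝ] ℝ) (ell : V →ₗ[ℝ] ℝ) (G : Set V)
    (φ₀ : V) : Prop where
  mem : φ₀ ∈ G
  apply_eq : ∀ ψ ∈ G, aperp φ₀ ψ = ell ψ

/-- `(p, q) ∈ G × A` solves the Asymptotic-Preserving formulation with parameter `ε`.
In the paper `A` is the `c`-orthogonal complement of `G`; here `G` and `A` may be any sets. -/
structure IsAPSolution_s13 (apar aperp : V →ₗ[ℝ] V →ₗ[ℝ] ℝ) (ell : V →ₗ[ℝ] ℝ) (G A : Set V)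
    (ε : ℝ) (p q : V) : Prop where
  fst_mem : p ∈ G
  snd_mem : q ∈ A
  apply_eq_of_mem_G : ∀ η ∈ G, aperp p η + aperp q η = ell η
  apply_eq_of_mem_A : ∀ ξ ∈ A, apar q ξ + ε * aperp q ξ + ε * aperp p ξ = ε * ell ξ

namespace IsAPSolution_s13

variable {apar aperp : V →ₗ[ℝ] V →ₗ[ℝ] ℝ} {ell : V →ₗ[ℝ] ℝ} {G A : Set V}
  {ε K : ℝ} {p q φ₀ : V}

theorem aperp_error_eq_zero (h : IsAPSolution_s13 apar aperp ell G A ε p q)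
    (h₀ : IsLimitSolution_s13 aperp ell G φ₀) {η : V} (hη : η ∈ G) :
    aperp (p + q - φ₀) η = 0 := by
  rw [map_sub, map_add, LinearMap.sub_apply, LinearMap.add_apply, h.apply_eq_of_mem_G η hη,
    h₀.apply_eq η hη, sub_self]

theorem aperp_error_self (h : IsAPSolution_s13 apar aperp ell G A ε p q)
    (h₀ : IsLimitSolution_s13 aperp ell G φ₀) :
    aperp (p + q - φ₀) (p + q - φ₀) = aperp (p + q - φ₀) q := by
  rw [map_sub (aperp _), map_add (aperp _), h.aperp_error_eq_zero h₀ h.fst_mem,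
    h.aperp_error_eq_zero h₀ h₀.mem, zero_add, sub_zero]

theorem energy_identity (h : IsAPSolution_s13 apar aperp ell G A ε p q)
    (h₀ : IsLimitSolution_s13 aperp ell G φ₀) :
    apar q q + ε * aperp (p + q - φ₀) (p + q - φ₀) = ε * (ell q - aperp φ₀ q) := by
  rw [h.aperp_error_self h₀, map_sub, map_add, LinearMap.sub_apply, LinearMap.add_apply]
  linear_combination h.apply_eq_of_mem_A q h.snd_mem

theorem apar_snd_le (h : IsAPSolution_s13 apar aperp ell G A ε p q)
    (h₀ : IsLimitSolution_s13 aperp ell G φ₀) (haperp : aperp.IsNonneg) (hε : 0 ≤ ε)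
    (hK : ell q - aperp φ₀ q ≤ K * √(apar q q)) : apar q q ≤ ε ^ 2 * K ^ 2 := by
  rw [← mul_pow]
  apply le_sq_of_le_mul_sqrt
  calc apar q q
      ≤ apar q q + ε * aperp (p + q - φ₀) (p + q - φ₀) :=
        le_add_of_nonneg_right (mul_nonneg hε (haperp.nonneg _))
    _ = ε * (ell q - aperp φ₀ q) := h.energy_identity h₀
    _ ≤ ε * (K * √(apar q q)) := mul_le_mul_of_nonneg_left hK hε
    _ = ε * K * √(apar q q) := (mul_assoc ..).symm

end IsAPSolution_s13

theorem lagrange_multiplier_uniform_bound_general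
    {W : Type*} [AddCommMonoid W] [Module ℝ W]
    {apar aperp : V →ₗ[ℝ] V →ₗ[ℝ] ℝ} {ell : V →ₗ[ℝ] ℝ} {G A : Set V}
    {ta : W →ₗ[ℝ] W →ₗ[ℝ] ℝ} {ι : V →ₗ[ℝ] W} {φ₀ : V} {K : ℝ}
    (haperp : aperp.IsNonneg) (hιa : ∀ φ ψ, ta (ι φ) (ι ψ) = apar φ ψ)
    (h₀ : IsLimitSolution_s13 aperp ell G φ₀)
    (hK : ∀ v ∈ A, ell v - aperp φ₀ v ≤ K * √(apar v v))
    {ε : ℝ} (hε : 0 < ε) {p q : V} (h : IsAPSolution_s13 apar aperp ell G A ε p q) :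
    apar q q ≤ ε ^ 2 * K ^ 2 ∧
      ∀ lam : W, (∀ η, ta η lam = (1 / ε) * ta (ι q) η) → ta lam lam ≤ K ^ 2 := by
  have hq : apar q q ≤ ε ^ 2 * K ^ 2 := h.apar_snd_le h₀ haperp hε.le (hK q h.snd_mem)
  refine ⟨hq, fun lam hlam ↦ ?_⟩
  calc ta lam lam
      = (1 / ε) ^ 2 * apar q q := by rw [apply_self_eq_sq_mul_of_forall_apply_eq hlam, hιa]
    _ ≤ (1 / ε) ^ 2 * (ε ^ 2 * K ^ 2) := by gcongr
    _ = K ^ 2 := by field_simp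

end AsymptoticPreserving

/-- Proposition 2.4, uniform bound on the Lagrange multiplier:
if |ℓ(q) − a⊥(φ⁰,q)| ≤ K √(a∥(q,q)) on A, then for every ε ∈ (0,1) the AP
solution satisfies a∥(q^ε,q^ε) ≤ ε²K², and any Lagrange multiplier λ^ε ∈ L
with ã(η,λ^ε) = (1/ε)ã(ι q^ε, η) for all η satisfies ã(λ^ε,λ^ε) ≤ K². -/
theorem lagrange_multiplier_uniform_bound
    {V : Type*} [NormedAddCommGroup V] [InnerProductSpace ℝ V] [CompleteSpace V]
    {W : Type*} [NormedAddCommGroup W] [InnerProductSpace ℝ W] [CompleteSpace W]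
    (apar aperp c : V →ₗ[ℝ] V →ₗ[ℝ] ℝ)
    (hapar : IsCSPForm apar) (haperp : IsCSPForm aperp) (hc : IsCSPForm c)
    (α : ℝ) (hα : 0 < α)
    (hcoer : ∀ φ : V, α * ‖φ‖ ^ 2 ≤ apar φ φ + aperp φ φ)
    -- Hypothesis B: bounded projection P onto G along A, V = G ⊕ A
    (P : V →L[ℝ] V)
    (hPG : ∀ φ : V, apar (P φ) (P φ) = 0)
    (hPA : ∀ φ : V, ∀ ψ : V, apar ψ ψ = 0 → c (φ - P φ) ψ = 0)
    (hPid : ∀ φ : V, apar φ φ = 0 → P φ = φ)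
    (hPzero : ∀ φ : V, (∀ ψ : V, apar ψ ψ = 0 → c φ ψ = 0) → P φ = 0)
    (ell : V →L[ℝ] ℝ) (F₀ : ℝ) (hF₀ : 0 ≤ F₀)
    (hell : ∀ ψ : V, |ell ψ| ≤ F₀ * Real.sqrt (c ψ ψ))
    -- Embedding into Ṽ = W
    (ta : W →ₗ[ℝ] W →ₗ[ℝ] ℝ) (hta : IsCSPForm ta)
    (L : Submodule ℝ W) (hLclosed : IsClosed (L : Set W))
    (ι : V →L[ℝ] W) (hι : Function.Injective ι)
    (hιa : ∀ φ ψ : V, ta (ι φ) (ι ψ) = apar φ ψ)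
    -- φ⁰ ∈ G is the unique solution of the Limit problem (L)
    (φ₀ : V) (hφ₀G : apar φ₀ φ₀ = 0)
    (hφ₀ : ∀ ψ : V, apar ψ ψ = 0 → aperp φ₀ ψ = ell ψ)
    (hφ₀uniq : ∀ φ' : V, apar φ' φ' = 0 →
      (∀ ψ : V, apar ψ ψ = 0 → aperp φ' ψ = ell ψ) → φ' = φ₀)
    -- the key estimate (valid e.g. when φ⁰ ∈ H²(Ω))
    (K : ℝ) (hK : 0 ≤ K)
    (hKest : ∀ q : V, (∀ ψ : V, apar ψ ψ = 0 → c q ψ = 0) →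
      |ell q - aperp φ₀ q| ≤ K * Real.sqrt (apar q q)) :
    ∀ ε ∈ Set.Ioo (0 : ℝ) 1, ∀ p q : V, apar p p = 0 →
      (∀ ψ : V, apar ψ ψ = 0 → c q ψ = 0) →
      (∀ η : V, apar η η = 0 → aperp p η + aperp q η = ell η) →
      (∀ ξ : V, (∀ ψ : V, apar ψ ψ = 0 → c ξ ψ = 0) →
        apar q ξ + ε * aperp q ξ + ε * aperp p ξ = ε * ell ξ) →
      apar q q ≤ ε ^ 2 * K ^ 2 ∧
      ∀ lam : W, lam ∈ L → (∀ η : W, ta η lam = (1 / ε) * ta (ι q) η) →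
        ta lam lam ≤ K ^ 2 := by
  intro ε hε p q hp hq hG hA
  exact (lagrange_multiplier_uniform_bound_general (ell := ell.toLinearMap) (ι := ι.toLinearMap)
    (G := {φ | apar φ φ = 0}) (A := {φ | ∀ ψ, apar ψ ψ = 0 → c φ ψ = 0}) ⟨haperp.2.1⟩ hιa
    ⟨hφ₀G, hφ₀⟩ (fun v hv ↦ (le_abs_self _).trans (hKest v hv)) hε.1
    ⟨hp, hq, hG, hA⟩).imp_right fun h lam _ ↦ h lam
end

section
/- (Weighted one-dimensional Poincaré inequality, Appendix A, inequality (uine).) Let 0 < m ≤ M, let J : [0,1] → ℝ be continuously differentiable with m ≤ J(t) ≤ M for all t ∈ [0,1], and let u : [0,1] → ℝ be continuously differentiable with ∫₀¹ u(t) dt = 0. Then ∫₀¹ u(t)²/J(t) dt ≤ (M/m) ∫₀¹ ( u'(t)/J(t) − u(t) J'(t)/J(t)² )² J(t) dt. -/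
/-!
The quotient `q = u / J` has derivative `u' / J - u J' / J²`, and `q² J = u² / J`. Since `u` is
continuous with zero mean, it vanishes at some `s`, and so does `q`; the fundamental theorem of
calculus from `s` and Cauchy–Schwarz then bound `q²` uniformly by `∫ q'²`. The bounds on `J` turn
this into the weighted inequality.
-/

open MeasureTheory Set

lemma sq_integral_norm_le {α E : Type*} [MeasurableSpace α] {μ : Measure α} [IsFiniteMeasure μ]
    [NormedAddCommGroup E] {f : α → E} (hf : MemLp f 2 μ) :
    (∫ x, ‖f x‖ ∂μ) ^ 2 ≤ μ.real univ * ∫ x, ‖f x‖ ^ 2 ∂μ := by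
  have hnorm : Integrable (fun x => ‖f x‖) μ := (hf.integrable one_le_two).norm
  have hsq : Integrable (fun x => ‖f x‖ ^ 2) μ := hf.norm.integrable_sq
  have hquad (c : ℝ) :
      0 ≤ μ.real univ * (c * c) + -2 * (∫ x, ‖f x‖ ∂μ) * c + ∫ x, ‖f x‖ ^ 2 ∂μ := by
    calc 0 ≤ ∫ x, (c ^ 2 - 2 * c * ‖f x‖ + ‖f x‖ ^ 2) ∂μ :=
          integral_nonneg fun x => by dsimp only [Pi.zero_apply]; linarith [sq_nonneg (c - ‖f x‖)]
      _ = _ := by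
        rw [integral_add (by fun_prop) hsq, integral_sub (by fun_prop) (by fun_prop),
          integral_const, integral_const_mul, smul_eq_mul]
        ring
  have hdiscrim := discrim_le_zero hquad
  rw [discrim] at hdiscrim
  linarith

section

variable {X : Type*} [TopologicalSpace X] [T2Space X] [MeasurableSpace X] [OpensMeasurableSpace X]
  {K : Set X} {μ : Measure X} [IsFiniteMeasureOnCompacts μ] {p : ENNReal}

lemma memLp_restrict_of_continuousOn_isCompact {E : Type*} [NormedAddCommGroup E] {f : X → E}
    (hf : ContinuousOn f K) (hK : IsCompact K) : MemLp f p (μ.restrict K) := by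
  have : IsFiniteMeasure (μ.restrict K) := isFiniteMeasure_restrict.2 hK.measure_ne_top
  obtain ⟨C, hC⟩ := hK.exists_bound_of_continuousOn hf
  exact .of_bound (hf.aestronglyMeasurable_of_isCompact hK hK.measurableSet) C
    (ae_restrict_of_forall_mem hK.measurableSet hC)

lemma memLp_continuousOn_mul_of_isCompact {R : Type*} [NormedRing R] {f g : X → R}
    (hg : ContinuousOn g K) (hK : IsCompact K) (hf : MemLp f p (μ.restrict K)) :
    MemLp (fun x => g x * f x) p (μ.restrict K) :=
  hf.mul' (memLp_restrict_of_continuousOn_isCompact (p := ⊤) hg hK)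

end

lemma exists_mem_Icc_eq_zero_of_integral_eq_zero {f : ℝ → ℝ} {a b : ℝ} (hab : a < b)
    (hf : ContinuousOn f (Icc a b)) (hint : ∫ t in a..b, f t = 0) : ∃ s ∈ Icc a b, f s = 0 := by
  rw [← uIcc_of_le hab.le] at hf ⊢
  obtain ⟨s, hs, hfs⟩ := exists_eq_interval_average hab.ne hf
  exact ⟨s, uIoo_subset_uIcc_self hs, by simpa [interval_average_eq_div, hint] using hfs⟩

section

variable {E : Type*} [NormedAddCommGroup E] [NormedSpace ℝ E] [CompleteSpace E]
  {a b s t : ℝ} {q q' : ℝ → E}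

lemma norm_sub_le_integral_norm_deriv (hq : ContinuousOn q (Icc a b))
    (hderiv : ∀ x ∈ Ioo a b, HasDerivAt q (q' x) x) (hint : IntegrableOn q' (Icc a b))
    (hs : s ∈ Icc a b) (ht : t ∈ Icc a b) : ‖q t - q s‖ ≤ ∫ x in Icc a b, ‖q' x‖ := by
  have hsub : uIcc s t ⊆ Icc a b := uIcc_subset_Icc hs ht
  have hftc : ∫ x in s..t, q' x = q t - q s :=
    intervalIntegral.integral_eq_sub_of_hasDeriv_right (hq.mono hsub)
      (fun x hx => (hderiv x
        (Ioo_subset_Ioo (le_min hs.1 ht.1) (max_le hs.2 ht.2) hx)).hasDerivWithinAt)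
      (hint.mono_set hsub).intervalIntegrable
  calc ‖q t - q s‖ = ‖∫ x in s..t, q' x‖ := by rw [hftc]
    _ ≤ ∫ x in uIoc s t, ‖q' x‖ := intervalIntegral.norm_integral_le_integral_norm_uIoc
    _ ≤ ∫ x in Icc a b, ‖q' x‖ :=
      setIntegral_mono_set hint.norm (.of_forall fun _ => norm_nonneg _)
        (uIoc_subset_uIcc.trans hsub).eventuallyLE

lemma norm_sub_sq_le_integral_norm_deriv_sq (hq : ContinuousOn q (Icc a b))
    (hderiv : ∀ x ∈ Ioo a b, HasDerivAt q (q' x) x) (hq' : MemLp q' 2 (volume.restrict (Icc a b)))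
    (hs : s ∈ Icc a b) (ht : t ∈ Icc a b) :
    ‖q t - q s‖ ^ 2 ≤ (b - a) * ∫ x in Icc a b, ‖q' x‖ ^ 2 := by
  calc ‖q t - q s‖ ^ 2 ≤ (∫ x in Icc a b, ‖q' x‖) ^ 2 := by
        gcongr
        exact norm_sub_le_integral_norm_deriv hq hderiv (hq'.integrable one_le_two) hs ht
    _ ≤ (b - a) * ∫ x in Icc a b, ‖q' x‖ ^ 2 := by
        simpa [max_eq_left (sub_nonneg.2 (hs.1.trans hs.2))] using sq_integral_norm_le hq'

lemma integral_norm_sq_mul_le_of_eq_zero {w : ℝ → ℝ} {m M : ℝ} (hm : 0 < m)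
    (hw : AEStronglyMeasurable w (volume.restrict (Icc a b))) (hmw : ∀ x ∈ Icc a b, m ≤ w x)
    (hwM : ∀ x ∈ Icc a b, w x ≤ M) (hq : ContinuousOn q (Icc a b))
    (hderiv : ∀ x ∈ Ioo a b, HasDerivAt q (q' x) x) (hq' : MemLp q' 2 (volume.restrict (Icc a b)))
    (hs : s ∈ Icc a b) (hqs : q s = 0) :
    ∫ x in Icc a b, ‖q x‖ ^ 2 * w x ≤
      M / m * (b - a) ^ 2 * ∫ x in Icc a b, ‖q' x‖ ^ 2 * w x := by
  have hab : 0 ≤ b - a := sub_nonneg.2 (hs.1.trans hs.2)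
  have hM : 0 < M := hm.trans_le ((hmw s hs).trans (hwM s hs))
  have hw_norm {x : ℝ} (hx : x ∈ Icc a b) : ‖w x‖ ≤ M :=
    (Real.norm_of_nonneg (hm.le.trans (hmw x hx))).trans_le (hwM x hx)
  have hsq : Integrable (fun x => ‖q' x‖ ^ 2) (volume.restrict (Icc a b)) := hq'.norm.integrable_sq
  set D := ∫ x in Icc a b, ‖q' x‖ ^ 2
  have hsup {x : ℝ} (hx : x ∈ Icc a b) : ‖q x‖ ^ 2 ≤ (b - a) * D := by
    simpa [hqs] using norm_sub_sq_le_integral_norm_deriv_sq hq hderiv hq' hs hx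
  have hupper : ∫ x in Icc a b, ‖q x‖ ^ 2 * w x ≤ (b - a) * D * M * (b - a) := by
    have hbound : ∀ x ∈ Icc a b, ‖‖q x‖ ^ 2 * w x‖ ≤ (b - a) * D * M := fun x hx => by
      rw [norm_mul, norm_pow, norm_norm]
      exact mul_le_mul (hsup hx) (hw_norm hx) (norm_nonneg _) ((sq_nonneg _).trans (hsup hx))
    simpa [hab] using (Real.le_norm_self _).trans
      (norm_setIntegral_le_of_norm_le_const (μ := volume) measure_Icc_lt_top hbound)
  have hlower : m * D ≤ ∫ x in Icc a b, ‖q' x‖ ^ 2 * w x := by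
    rw [← integral_const_mul]
    refine setIntegral_mono_on (hsq.const_mul m)
      (hsq.mul_bdd hw (ae_restrict_of_forall_mem measurableSet_Icc fun _ => hw_norm))
      measurableSet_Icc fun x hx => ?_
    rw [mul_comm]
    exact mul_le_mul_of_nonneg_left (hmw x hx) (sq_nonneg _)
  calc ∫ x in Icc a b, ‖q x‖ ^ 2 * w x ≤ (b - a) * D * M * (b - a) := hupper
    _ = M / m * (b - a) ^ 2 * (m * D) := by field_simp
    _ ≤ M / m * (b - a) ^ 2 * ∫ x in Icc a b, ‖q' x‖ ^ 2 * w x := by gcongr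

end

theorem weighted_poincare_inequality_general {m M a b s : ℝ} (hm : 0 < m) {J J' u u' : ℝ → ℝ}
    (hJ : ContinuousOn J (Icc a b)) (hJderiv : ∀ t ∈ Ioo a b, HasDerivAt J (J' t) t)
    (hJ' : MemLp J' 2 (volume.restrict (Icc a b)))
    (hu : ContinuousOn u (Icc a b)) (huderiv : ∀ t ∈ Ioo a b, HasDerivAt u (u' t) t)
    (hu' : MemLp u' 2 (volume.restrict (Icc a b)))
    (hJm : ∀ t ∈ Icc a b, m ≤ J t) (hJM : ∀ t ∈ Icc a b, J t ≤ M)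
    (hs : s ∈ Icc a b) (hus : u s = 0) :
    ∫ t in a..b, u t ^ 2 / J t ≤
      M / m * (b - a) ^ 2 * ∫ t in a..b, (u' t / J t - u t * J' t / J t ^ 2) ^ 2 * J t := by
  have hJ0 : ∀ t ∈ Icc a b, J t ≠ 0 := fun t ht => (hm.trans_le (hJm t ht)).ne'
  have hderiv : ∀ t ∈ Ioo a b,
      HasDerivAt (fun t => u t / J t) (u' t / J t - u t * J' t / J t ^ 2) t := fun t ht => by
    have hJt := hJ0 t (Ioo_subset_Icc_self ht)
    exact ((huderiv t ht).div (hJderiv t ht) hJt).congr_deriv (by field_simp)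
  have hmem : MemLp (fun t => u' t / J t - u t * J' t / J t ^ 2) 2
      (volume.restrict (Icc a b)) := by
    have hmain := memLp_continuousOn_mul_of_isCompact (hJ.inv₀ hJ0) isCompact_Icc hu'
    have hcorr := memLp_continuousOn_mul_of_isCompact
      (hu.div (hJ.pow 2) fun t ht => pow_ne_zero 2 (hJ0 t ht)) isCompact_Icc hJ'
    convert hmain.sub hcorr using 1
    funext t
    simp only [Pi.sub_apply, Pi.inv_apply, Pi.div_apply, Pi.pow_apply]
    ring
  have hsq_div : ∀ t ∈ Icc a b, u t ^ 2 / J t = ‖u t / J t‖ ^ 2 * J t := fun t ht => by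
    have hJt := hJ0 t ht
    rw [Real.norm_eq_abs, sq_abs]
    field_simp
  rw [intervalIntegral.integral_of_le (hs.1.trans hs.2),
    intervalIntegral.integral_of_le (hs.1.trans hs.2), ← integral_Icc_eq_integral_Ioc,
    ← integral_Icc_eq_integral_Ioc, setIntegral_congr_fun measurableSet_Icc hsq_div]
  simpa only [Real.norm_eq_abs, sq_abs, Pi.div_apply] using
    integral_norm_sq_mul_le_of_eq_zero hm (hJ.aestronglyMeasurable measurableSet_Icc) hJm hJM
      (hu.div hJ hJ0) hderiv hmem hs (by simp [hus])

/-- weighted one-dimensional Poincaré inequality, Appendix A,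
inequality (uine): for 0 < m ≤ J ≤ M on [0,1], J, u ∈ C¹([0,1]) and
∫₀¹ u = 0, one has
∫₀¹ u²/J ≤ (M/m) ∫₀¹ (u'/J − u J'/J²)² J. -/
theorem weighted_poincare_inequality
    (m M : ℝ) (hm : 0 < m) (hmM : m ≤ M)
    (J J' u u' : ℝ → ℝ)
    (hJderiv : ∀ t ∈ Set.Icc (0 : ℝ) 1, HasDerivAt J (J' t) t)
    (hJ'cont : ContinuousOn J' (Set.Icc (0 : ℝ) 1))
    (huderiv : ∀ t ∈ Set.Icc (0 : ℝ) 1, HasDerivAt u (u' t) t)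
    (hu'cont : ContinuousOn u' (Set.Icc (0 : ℝ) 1))
    (hJm : ∀ t ∈ Set.Icc (0 : ℝ) 1, m ≤ J t)
    (hJM : ∀ t ∈ Set.Icc (0 : ℝ) 1, J t ≤ M)
    (hmean : ∫ t in (0 : ℝ)..1, u t = 0) :
    ∫ t in (0 : ℝ)..1, u t ^ 2 / J t
      ≤ (M / m) * ∫ t in (0 : ℝ)..1,
          (u' t / J t - u t * J' t / J t ^ 2) ^ 2 * J t := by
  have hu := HasDerivAt.continuousOn huderiv
  obtain ⟨s, hs, hus⟩ := exists_mem_Icc_eq_zero_of_integral_eq_zero zero_lt_one hu hmean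
  simpa using weighted_poincare_inequality_general hm (HasDerivAt.continuousOn hJderiv)
    (fun t ht => hJderiv t (Ioo_subset_Icc_self ht))
    (memLp_restrict_of_continuousOn_isCompact hJ'cont isCompact_Icc) hu
    (fun t ht => huderiv t (Ioo_subset_Icc_self ht))
    (memLp_restrict_of_continuousOn_isCompact hu'cont isCompact_Icc) hJm hJM hs hus
end

section
/- (Appendix B Claim.) Let n ≥ 2 and m ≥ 2 be integers, let M be an invertible n × n real matrix and K an arbitrary m × m real matrix. On the space W = ℝ^{n×m} of coefficient matrices define the bilinear form B(λ, p) = Σ_{i,k=1}^{n} Σ_{j,l=1}^{m} λ_{ij} M_{ik} K_{jl} p_{kl}. Let V_h := {p ∈ W : p_{1,l} = 0 and p_{n,l} = 0 for all l = 1,…,m} and L_h := {λ ∈ W : λ_{i,1} = 0 for all i = 1,…,n}. Then the subspace N := {λ ∈ L_h : B(λ, p) = 0 for all p ∈ V_h} has dimension at least 2(m−1); in particular N ≠ {0}. (Explicitly, the matrices a ⊗ e_j and a' ⊗ e_j for j = 2,…,m, where M a = e₁ and M a' = e_n with e₁, e_n, e_j standard basis vectors, are 2(m−1) linearly independent elements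 of N.) -/
/-!
The form is `B(λ, p) = ∑ k, (Mᵀ λ)ₖ ⬝ᵥ K pₖ`, and the rows `pₖ` of a test function `p ∈ V_h` vanish
for `k` in the two boundary rows. So `λ ∈ L_h` lies in `N` as soon as the other `n - 2` rows of
`Mᵀ λ` vanish. This imposes only `n - 2` linear conditions on the `n` entries of each of the `m - 1`
free columns of `λ`, which leaves at least `2 (m - 1)` dimensions.
-/

open Finset Matrix Module

namespace ParallelForm

section Definitions

variable {R ι κ : Type*} [CommSemiring R]

variable (R κ) in
/-- The coefficient matrices whose rows in `S` are zero: the space `V_h`, with `S` the Dirichlet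
nodes in the first variable. -/
def rowsVanishing (S : Finset ι) : Submodule R (Matrix ι κ R) where
  carrier := {p | ∀ i ∈ S, ∀ j, p i j = 0}
  zero_mem' _ _ _ := rfl
  add_mem' hp hq i hi j := by simp [hp i hi j, hq i hi j]
  smul_mem' c p hp i hi j := by simp [hp i hi j]

variable (R ι) in
/-- The coefficient matrices whose columns in `T` are zero: the space `L_h`, with `T` the inflow
nodes in the second variable. -/
def colsVanishing (T : Finset κ) : Submodule R (Matrix ι κ R) where
  carrier := {lam | ∀ j ∈ T, ∀ i, lam i j = 0}
  zero_mem' _ _ _ := rfl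
  add_mem' hp hq j hj i := by simp [hp j hj i, hq j hj i]
  smul_mem' c p hp j hj i := by simp [hp j hj i]

lemma mem_rowsVanishing {S : Finset ι} {p : Matrix ι κ R} :
    p ∈ rowsVanishing R κ S ↔ ∀ i ∈ S, ∀ j, p i j = 0 := Iff.rfl

lemma mem_colsVanishing {T : Finset κ} {lam : Matrix ι κ R} :
    lam ∈ colsVanishing R ι T ↔ ∀ j ∈ T, ∀ i, lam i j = 0 := Iff.rfl

variable [Fintype ι] [Fintype κ]

/-- The bilinear form `B(λ, p) = ∑ λ_{ij} M_{ik} K_{jl} p_{kl}` on coefficient matrices. -/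
def parallelForm (M : Matrix ι ι R) (K : Matrix κ κ R) :
    Matrix ι κ R →ₗ[R] Matrix ι κ R →ₗ[R] R :=
  LinearMap.mk₂ R (fun lam p => ∑ i, ∑ k, ∑ j, ∑ l, lam i j * M i k * K j l * p k l)
    (fun _ _ _ => by simp only [Matrix.add_apply, add_mul, sum_add_distrib])
    (fun _ _ _ => by simp only [Matrix.smul_apply, smul_eq_mul, mul_sum, mul_assoc])
    (fun _ _ _ => by simp only [Matrix.add_apply, mul_add, sum_add_distrib])
    (fun _ _ _ => by simp only [Matrix.smul_apply, smul_eq_mul, mul_sum, mul_left_comm])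

/-- The space `N` of multipliers in `L_h` on which the form vanishes against all of `V_h`. The form
is flipped because `Submodule.orthogonalBilin` puts the submodule in the first argument. -/
def multiplierKernel (M : Matrix ι ι R) (K : Matrix κ κ R) (S : Finset ι) (T : Finset κ) :
    Submodule R (Matrix ι κ R) :=
  colsVanishing R ι T ⊓ (rowsVanishing R κ S).orthogonalBilin (parallelForm M K).flip

lemma mem_multiplierKernel {M : Matrix ι ι R} {K : Matrix κ κ R} {S : Finset ι} {T : Finset κ}
    {lam : Matrix ι κ R} :
    lam ∈ multiplierKernel M K S T ↔
      lam ∈ colsVanishing R ι T ∧ ∀ p ∈ rowsVanishing R κ S, parallelForm M K lam p = 0 := Iff.rfl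

end Definitions

section CommSemiring

variable {R ι κ : Type*} [CommSemiring R] [Fintype ι] [Fintype κ]

lemma parallelForm_eq_sum_dotProduct (M : Matrix ι ι R) (K : Matrix κ κ R)
    (lam p : Matrix ι κ R) :
    parallelForm M K lam p = ∑ k, (Mᵀ * lam) k ⬝ᵥ K *ᵥ p k := by
  simp only [parallelForm, LinearMap.mk₂_apply, dotProduct, mulVec, mul_apply, transpose_apply,
    sum_mul, mul_sum]
  rw [sum_comm]
  refine sum_congr rfl fun k _ => ?_
  rw [sum_comm]
  refine sum_congr rfl fun j _ => ?_
  rw [sum_comm]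
  exact sum_congr rfl fun l _ => sum_congr rfl fun i _ => by ring

lemma parallelForm_eq_zero {M : Matrix ι ι R} (K : Matrix κ κ R) {lam p : Matrix ι κ R}
    {S : Finset ι} (hlam : ∀ k ∉ S, (Mᵀ * lam) k = 0) (hp : p ∈ rowsVanishing R κ S) :
    parallelForm M K lam p = 0 := by
  rw [parallelForm_eq_sum_dotProduct]
  refine sum_eq_zero fun k _ => ?_
  by_cases hk : k ∈ S
  · have hpk : p k = 0 := funext (mem_rowsVanishing.mp hp k hk)
    rw [hpk, mulVec_zero, dotProduct_zero]
  · rw [hlam k hk, zero_dotProduct]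

variable [DecidableEq ι] [DecidableEq κ]

/-- Linear conditions on a multiplier that place it in `N`: its columns in `T` vanish, and so do the
entries of `Mᵀ λ` outside the rows in `S` and the columns in `T`. -/
def kernelConstraints (M : Matrix ι ι R) (S : Finset ι) (T : Finset κ) :
    Matrix ι κ R →ₗ[R] Matrix ι T R × Matrix ↥Sᶜ ↥Tᶜ R where
  toFun lam := (lam.submatrix id (↑), (Mᵀ * lam).submatrix (↑) (↑))
  map_add' _ _ := by simp only [Matrix.mul_add, submatrix_add, Pi.add_apply, Prod.mk_add_mk]
  map_smul' _ _ := by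
    simp only [Matrix.mul_smul, submatrix_smul, Pi.smul_apply, Prod.smul_mk, RingHom.id_apply]

lemma mem_ker_kernelConstraints {M : Matrix ι ι R} {S : Finset ι} {T : Finset κ}
    {lam : Matrix ι κ R} :
    lam ∈ LinearMap.ker (kernelConstraints M S T) ↔
      lam ∈ colsVanishing R ι T ∧ ∀ k ∉ S, ∀ j ∉ T, (Mᵀ * lam) k j = 0 := by
  simp only [LinearMap.mem_ker, kernelConstraints, LinearMap.coe_mk, AddHom.coe_mk,
    Prod.mk_eq_zero, ← Matrix.ext_iff, submatrix_apply, id_eq, Matrix.zero_apply,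
    mem_colsVanishing, Subtype.forall, mem_compl]
  grind

lemma ker_kernelConstraints_le (M : Matrix ι ι R) (K : Matrix κ κ R) (S : Finset ι)
    (T : Finset κ) :
    LinearMap.ker (kernelConstraints M S T) ≤ multiplierKernel M K S T := by
  intro lam hlam
  obtain ⟨hcols, hST⟩ := mem_ker_kernelConstraints.mp hlam
  have hrows : ∀ k ∉ S, (Mᵀ * lam) k = 0 := by
    intro k hk
    ext j
    by_cases hj : j ∈ T
    · rw [mul_apply]
      exact sum_eq_zero fun i _ => by rw [mem_colsVanishing.mp hcols j hj i, mul_zero]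
    · exact hST k hk j hj
  exact mem_multiplierKernel.mpr ⟨hcols, fun p hp => parallelForm_eq_zero K hrows hp⟩

end CommSemiring

section Field

variable {𝕜 ι κ : Type*} [Field 𝕜] [Fintype ι] [Fintype κ] [DecidableEq κ]

lemma card_mul_card_compl_le_finrank_multiplierKernel (M : Matrix ι ι 𝕜) (K : Matrix κ κ 𝕜)
    (S : Finset ι) (T : Finset κ) :
    #S * #Tᶜ ≤ finrank 𝕜 (multiplierKernel M K S T) := by
  classical
  have hrank := (kernelConstraints M S T).finrank_range_add_finrank_ker
  have hrange := (LinearMap.range (kernelConstraints M S T)).finrank_le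
  have hker := Submodule.finrank_mono (ker_kernelConstraints_le M K S T)
  simp only [finrank_prod, finrank_matrix, Fintype.card_coe, finrank_self, mul_one]
    at hrank hrange
  have hcard : Fintype.card ι * Fintype.card κ =
      Fintype.card ι * #T + #Sᶜ * #Tᶜ + #S * #Tᶜ := by
    rw [← card_add_card_compl T, ← card_add_card_compl S]
    ring
  omega

end Field

end ParallelForm

open ParallelForm

theorem discrete_lagrange_space_ill_posed_general {𝕜 : Type*} [Field 𝕜] {n m : ℕ}
    (M : Matrix (Fin n) (Fin n) 𝕜) (K : Matrix (Fin m) (Fin m) 𝕜) {first last : Fin n}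
    (hne : first ≠ last) (inflow : Fin m) :
    ∃ fam : Fin (2 * (m - 1)) → Matrix (Fin n) (Fin m) 𝕜,
      LinearIndependent 𝕜 fam ∧
      ∀ a, (∀ i, fam a i inflow = 0) ∧
        ∀ p : Matrix (Fin n) (Fin m) 𝕜, (∀ l, p first l = 0 ∧ p last l = 0) →
          ∑ i, ∑ k, ∑ j, ∑ l, fam a i j * M i k * K j l * p k l = 0 := by
  have hdim := card_mul_card_compl_le_finrank_multiplierKernel M K {first, last} {inflow}
  rw [card_pair hne, card_compl, Fintype.card_fin, card_singleton] at hdim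
  obtain ⟨fam, hli⟩ := exists_linearIndependent_of_le_finrank hdim
  refine ⟨fun a => fam a, hli.map' _ (Submodule.ker_subtype _), fun a => ?_⟩
  obtain ⟨hcols, hform⟩ := mem_multiplierKernel.mp (fam a).2
  refine ⟨mem_colsVanishing.mp hcols _ (mem_singleton_self _), fun p hp => hform p ?_⟩
  simpa only [mem_rowsVanishing, forall_mem_insert, mem_singleton, forall_eq, ← forall_and]
    using hp

/-- Appendix B Claim: with M invertible, the subspace
N = {λ ∈ L_h : B(λ,p) = 0 for all p ∈ V_h} of the discrete Lagrange
multiplier space has dimension at least 2(m−1); in particular N ≠ {0}.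
Here B(λ,p) = Σ_{i,k,j,l} λ_{ij} M_{ik} K_{jl} p_{kl},
V_h = {p : p_{1,l} = p_{n,l} = 0 ∀l} (rows indexed by Fin n, row 1 = index 0,
row n = index n−1) and L_h = {λ : λ_{i,1} = 0 ∀i} (column 1 = index 0). -/
theorem discrete_lagrange_space_ill_posed
    (n m : ℕ) (hn : 2 ≤ n) (hm : 2 ≤ m)
    (M : Matrix (Fin n) (Fin n) ℝ) (hM : IsUnit M.det)
    (K : Matrix (Fin m) (Fin m) ℝ) :
    (∃ fam : Fin (2 * (m - 1)) → Matrix (Fin n) (Fin m) ℝ,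
      LinearIndependent ℝ fam ∧
      ∀ a : Fin (2 * (m - 1)),
        (∀ i : Fin n, fam a i (⟨0, by omega⟩ : Fin m) = 0) ∧
        (∀ p : Matrix (Fin n) (Fin m) ℝ,
          (∀ l : Fin m, p (⟨0, by omega⟩ : Fin n) l = 0 ∧
            p (⟨n - 1, by omega⟩ : Fin n) l = 0) →
          (∑ i : Fin n, ∑ k : Fin n, ∑ j : Fin m, ∑ l : Fin m,
            fam a i j * M i k * K j l * p k l) = 0)) ∧
    (∃ lam : Matrix (Fin n) (Fin m) ℝ, lam ≠ 0 ∧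
      (∀ i : Fin n, lam i (⟨0, by omega⟩ : Fin m) = 0) ∧
      ∀ p : Matrix (Fin n) (Fin m) ℝ,
        (∀ l : Fin m, p (⟨0, by omega⟩ : Fin n) l = 0 ∧
          p (⟨n - 1, by omega⟩ : Fin n) l = 0) →
        (∑ i : Fin n, ∑ k : Fin n, ∑ j : Fin m, ∑ l : Fin m,
          lam i j * M i k * K j l * p k l) = 0) := by
  have hne : (⟨0, by omega⟩ : Fin n) ≠ ⟨n - 1, by omega⟩ := Fin.ne_of_val_ne (by lia)
  obtain ⟨fam, hli, hN⟩ := discrete_lagrange_space_ill_posed_general M K hne ⟨0, by omega⟩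
  exact ⟨⟨fam, hli, hN⟩, fam ⟨0, by omega⟩, hli.ne_zero _, hN _⟩
end
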